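/- arXiv:2206.11099 — 2 statements merged into one kernel-verified Lean document; each statement's English description precedes it below -/
import Mathlib

section
/- Every completely normal generalized spectral space with at most ℵ₁ compact open sets embeds, as a spectral subspace, into the ℓ-spectrum of some Abelian ℓ-group. -/
universe u

/-- An Abelian `ℓ`-group: an abelian group endowed with a translation-invariant
lattice order. -/
structure AbelianLGroup where
  carrier : Type u
  [lat : Lattice carrier]
  [grp : AddCommGroup carrier]
  add_le_add_left' : ∀ a b : carrier, a ≤ b → ∀ c : carrier, c + a ≤ c + b

attribute [instance] AbelianLGroup.lat AbelianLGroup.grp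

/-- An `ℓ`-ideal of an Abelian `ℓ`-group: an order-convex subgroup closed under the
lattice operations, equivalently a subgroup `P` such that `|x| ≤ |y|` and `y ∈ P`
imply `x ∈ P` (here `|x| = x ⊔ -x`). -/
def IsLIdeal {G : Type*} [Lattice G] [AddCommGroup G] (P : Set G) : Prop :=
  (0 : G) ∈ P ∧ (∀ x y : G, x ∈ P → y ∈ P → x + y ∈ P) ∧ (∀ x : G, x ∈ P → -x ∈ P) ∧
    (∀ x y : G, y ∈ P → x ⊔ -x ≤ y ⊔ -y → x ∈ P)

/-- A prime `ℓ`-ideal: a proper `ℓ`-ideal `P` with `x ⊓ y ∈ P → x ∈ P ∨ y ∈ P`. -/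
def IsPrimeLIdeal {G : Type*} [Lattice G] [AddCommGroup G] (P : Set G) : Prop :=
  IsLIdeal P ∧ P ≠ Set.univ ∧ ∀ x y : G, x ⊓ y ∈ P → x ∈ P ∨ y ∈ P

/-- The `ℓ`-spectrum of an Abelian `ℓ`-group: the set of its prime `ℓ`-ideals. -/
def LSpectrum (G : Type*) [Lattice G] [AddCommGroup G] : Type _ :=
  {P : Set G // IsPrimeLIdeal P}

/-- The hull-kernel topology on the `ℓ`-spectrum: the closed sets are the sets
`{P : X ⊆ P}` for `X ⊆ G`; equivalently, the topology is generated by the basic open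
sets `{P : a ∉ P}` for `a ∈ G`. -/
instance (G : Type*) [Lattice G] [AddCommGroup G] : TopologicalSpace (LSpectrum G) :=
  TopologicalSpace.generateFrom {U : Set (LSpectrum G) | ∃ a : G, U = {P | a ∉ P.1}}

/-! Let `K` be the lattice of compact open sets. The space is recovered from a family of total
preorders on a rational vector space `V`, one for each point `x`, such that the sets `{x | 0 <ₓ a}`
with `a ∈ V` are exactly the members of `K`: dividing `V` by the equivalence at `x` gives linearly
ordered groups `T x`, and `x` corresponds to the `x`-th coordinate ideal of the `ℓ`-subgroup of
`∏ x, T x` generated by the image of `V`.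

Such a family is built on a vector space whose basis is indexed by `ω₁`, in such a way that the
basis vectors `t` run through the prescribed sets `{x | 0 <ₓ t}`. The basis vectors are adjoined one
at a time, and extending the preorders to `t` amounts to choosing the cuts `{u | u <ₓ t}`. At each
stage only countably many vectors `u` are present, so the sets `{x | u <ₓ t}` and `{x | t <ₓ u}` can
be chosen for one `u` after the other. Each choice is then subject to finitely many constraints,
which complete normality allows one to satisfy. -/

section Recursion

lemma exists_forall_of_forall_lt {ι : Type*} [Preorder ι] [WellFoundedLT ι] {β : ι → Type*}
    [∀ i, Nonempty (β i)] {R : ∀ i, (∀ j, β j) → β i → Prop}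
    (hcongr : ∀ i p p' b, (∀ j < i, p j = p' j) → R i p b → R i p' b)
    (hstep : ∀ i p, (∀ j < i, R j p (p j)) → ∃ b, R i p b) :
    ∃ p : ∀ i, β i, ∀ i, R i p (p i) := by
  classical
  have hnext : ∀ i p, ∃ b, (∀ j < i, R j p (p j)) → R i p b := fun i p => by
    by_cases hp : ∀ j < i, R j p (p j)
    · exact (hstep i p hp).imp fun b hb _ => hb
    · exact ⟨Classical.arbitrary _, fun h => absurd h hp⟩
  choose next hnext using hnext
  let extend (i : ι) (p : ∀ j < i, β j) (j : ι) : β j :=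
    if hj : j < i then p j hj else Classical.arbitrary _
  let p : ∀ i, β i := WellFoundedLT.fix fun i p => next i (extend i p)
  have hp : ∀ i, p i = next i (extend i fun j _ => p j) := WellFoundedLT.fix_eq _
  have hextend : ∀ i, ∀ j < i, extend i (fun j _ => p j) j = p j := fun i j hj => dif_pos hj
  refine ⟨p, fun i => ?_⟩
  induction i using WellFoundedLT.induction with
  | ind i ih =>
    refine hcongr i _ p _ (hextend i) ?_
    rw [hp i]
    refine hnext i _ fun j hj => ?_
    rw [hextend i j hj]
    exact hcongr j p _ _ (fun k hk => (hextend i k (hk.trans hj)).symm) (ih j hj)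

end Recursion

section Cut

/-- A completely normal distributive `0`-lattice, represented as a lattice of subsets of `X`. -/
structure IsCompletelyNormalFamily {X : Type*} (K : Set (Set X)) : Prop extends
    IsSublattice K where
  empty_mem : ∅ ∈ K
  exists_split : ∀ U ∈ K, ∀ V ∈ K, ∃ A ∈ K, ∃ B ∈ K, U ∪ V = U ∪ B ∧ U ∪ V = A ∪ V ∧ A ∩ B = ∅

/-- A pair of disjoint members of `K`. As the value at `u` of a family of cuts indexed by the points
of `X`, it records the points at which `u` lies below, respectively above, the cut. -/
structure DisjointPair {X : Type*} (K : Set (Set X)) where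
  below : Set X
  above : Set X
  below_mem : below ∈ K
  above_mem : above ∈ K
  disjoint : Disjoint below above

/-- A family of total preorders on `I`, indexed by the points of `X`, with values in `K`: the set
`lt u v` consists of the points at which `u` lies strictly below `v`. -/
structure IsPreorderFamily {X I : Type*} (K : Set (Set X)) (lt : I → I → Set X) : Prop where
  mem : ∀ u v, lt u v ∈ K
  disjoint : ∀ u v, Disjoint (lt u v) (lt v u)
  subset_union : ∀ u v w, lt u w ⊆ lt u v ∪ lt v w

/-- The conditions under which `b` and `b'` may be the values at `u` and `v` of a family of cuts
of the total preorders `lt`. -/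
structure IsCutPair {X I : Type*} {K : Set (Set X)} (lt : I → I → Set X) (u v : I)
    (b b' : DisjointPair K) : Prop where
  below_subset : b.below ⊆ b'.below ∪ lt u v
  above_subset : b.above ⊆ b'.above ∪ lt v u
  lt_subset : lt v u ⊆ b.above ∪ b'.below

/-- A family of cuts, indexed by the points of `X`, of the total preorders `lt`. -/
def IsCut {X I : Type*} {K : Set (Set X)} (lt : I → I → Set X) (f : I → DisjointPair K) : Prop :=
  ∀ u v, IsCutPair lt u v (f u) (f v)

variable {X I : Type*} {K : Set (Set X)} {lt : I → I → Set X}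

lemma IsCompletelyNormalFamily.exists_disjointPair (hK : IsCompletelyNormalFamily K)
    {U V : Set X} (hU : U ∈ K) (hV : V ∈ K) :
    ∃ b : DisjointPair K, b.below ⊆ U ∧ b.above ⊆ V ∧ U \ V ⊆ b.below ∧ V \ U ⊆ b.above := by
  obtain ⟨A, hA, B, hB, hUB, hAV, hAB⟩ := hK.exists_split U hU V hV
  refine ⟨⟨U ∩ A, V ∩ B, hK.infClosed hU hA, hK.infClosed hV hB, ?_⟩, Set.inter_subset_left,
    Set.inter_subset_left, fun x hx => ⟨hx.1, ?_⟩, fun x hx => ⟨hx.1, ?_⟩⟩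
  · exact (Set.disjoint_iff_inter_eq_empty.2 hAB).mono Set.inter_subset_right Set.inter_subset_right
  · exact (hAV.subset (Or.inl hx.1)).resolve_right hx.2
  · exact (hUB.subset (Or.inr hx.1)).resolve_left hx.2

lemma IsPreorderFamily.eq_empty (hlt : IsPreorderFamily K lt) (u : I) : lt u u = ∅ :=
  disjoint_self.1 (hlt.disjoint u u)

lemma IsPreorderFamily.comap (hlt : IsPreorderFamily K lt) {J : Type*} (e : J → I) :
    IsPreorderFamily K fun i j => lt (e i) (e j) where
  mem i j := hlt.mem (e i) (e j)
  disjoint i j := hlt.disjoint (e i) (e j)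
  subset_union i j k := hlt.subset_union (e i) (e j) (e k)

lemma IsPreorderFamily.isCutPair_self (hlt : IsPreorderFamily K lt) (u : I) (b : DisjointPair K) :
    IsCutPair lt u u b b := by
  constructor <;> simp [hlt.eq_empty u]

/-- The value at `w` is obtained by splitting the largest candidates for the points at which `w` may
lie below, respectively above, the cut. -/
lemma IsPreorderFamily.exists_isCutPair (hK : IsCompletelyNormalFamily K)
    (hlt : IsPreorderFamily K lt) {s : Set I} (hs : s.Finite) (hne : s.Nonempty)
    {f : I → DisjointPair K} (hf : ∀ u ∈ s, ∀ v ∈ s, IsCutPair lt u v (f u) (f v)) (w : I) :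
    ∃ b, ∀ u ∈ s, IsCutPair lt u w (f u) b ∧ IsCutPair lt w u b (f u) := by
  let U := ⋂ v ∈ s, (f v).below ∪ lt w v
  let V := ⋂ v ∈ s, (f v).above ∪ lt v w
  have hU : U ∈ K := hK.infClosed.biInf_mem_of_nonempty hs hne
    fun v _ => hK.supClosed (f v).below_mem (hlt.mem w v)
  have hV : V ∈ K := hK.infClosed.biInf_mem_of_nonempty hs hne
    fun v _ => hK.supClosed (f v).above_mem (hlt.mem v w)
  obtain ⟨b, hbU, hbV, hUb, hVb⟩ := hK.exists_disjointPair hU hV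
  refine ⟨b, fun u hu => ?_⟩
  have hasymm : ∀ x ∈ lt u w, x ∉ lt w u := fun x hx => Set.disjoint_left.1 (hlt.disjoint u w) hx
  have hdisj : ∀ x ∈ (f u).below, x ∉ (f u).above :=
    fun x hx => Set.disjoint_left.1 (f u).disjoint hx
  have hbelow : ∀ x, x ∈ (f u).below ∪ lt w u → x ∉ (f u).above → x ∉ lt u w → x ∈ b.below := by
    intro x hx habove hle
    refine hUb ⟨Set.mem_iInter₂.2 fun v hv => ?_, fun hxV => ?_⟩
    · have := (hf u hu v hv).below_subset
      have := (hf u hu v hv).lt_subset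
      have := hlt.subset_union u w v
      have := hlt.subset_union w v u
      grind
    · exact (Set.mem_iInter₂.1 hxV u hu).elim habove hle
  have habove : ∀ x, x ∈ (f u).above ∪ lt u w → x ∉ (f u).below → x ∉ lt w u → x ∈ b.above := by
    intro x hx hbelow hle
    refine hVb ⟨Set.mem_iInter₂.2 fun v hv => ?_, fun hxU => ?_⟩
    · have := (hf u hu v hv).above_subset
      have := (hf v hv u hu).lt_subset
      have := hlt.subset_union v w u
      have := hlt.subset_union u v w
      grind
    · exact (Set.mem_iInter₂.1 hxU u hu).elim hbelow hle
  refine ⟨⟨?_, ?_, ?_⟩, ⟨hbU.trans (Set.biInter_subset_of_mem hu),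
    hbV.trans (Set.biInter_subset_of_mem hu), ?_⟩⟩ <;> intro x hx <;> grind

lemma IsPreorderFamily.exists_isCut_nat (hK : IsCompletelyNormalFamily K) {lt : ℕ → ℕ → Set X}
    (hlt : IsPreorderFamily K lt) (b₀ : DisjointPair K) : ∃ f, f 0 = b₀ ∧ IsCut lt f := by
  have : Nonempty (DisjointPair K) := ⟨b₀⟩
  obtain ⟨f, hf⟩ := exists_forall_of_forall_lt
    (R := fun n (f : ℕ → DisjointPair K) b => (n = 0 → b = b₀) ∧
      ∀ i < n, IsCutPair lt i n (f i) b ∧ IsCutPair lt n i b (f i))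
    (fun n f f' b hff' hb => ⟨hb.1, fun i hi => hff' i hi ▸ hb.2 i hi⟩) fun n f hf => by
      rcases Nat.eq_zero_or_pos n with rfl | hn
      · exact ⟨b₀, by simp⟩
      · refine (hlt.exists_isCutPair hK (Set.finite_Iio n) ⟨0, hn⟩ (fun i hi j hj => ?_) n).imp
          fun b hb => ⟨fun h => absurd h hn.ne', hb⟩
        rcases lt_trichotomy i j with hij | rfl | hij
        exacts [((hf j hj).2 i hij).1, hlt.isCutPair_self i _, ((hf i hi).2 j hij).2]
  refine ⟨f, (hf 0).1 rfl, fun i j => ?_⟩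
  rcases lt_trichotomy i j with hij | rfl | hij
  exacts [((hf j).2 i hij).1, hlt.isCutPair_self i _, ((hf i).2 j hij).2]

theorem IsPreorderFamily.exists_isCut [Countable I] (hK : IsCompletelyNormalFamily K)
    (hlt : IsPreorderFamily K lt) (u₀ : I) (b₀ : DisjointPair K) :
    ∃ f, f u₀ = b₀ ∧ IsCut lt f := by
  classical
  have : Nonempty I := ⟨u₀⟩
  obtain ⟨k, hk⟩ := exists_surjective_nat I
  let e : ℕ → I := fun n => Nat.casesOn n u₀ k
  let index : I → ℕ := fun u => if u = u₀ then 0 else Function.surjInv hk u + 1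
  have he : ∀ u, e (index u) = u := fun u => by
    by_cases hu : u = u₀
    · simp [index, e, hu]
    · simp [index, e, hu, Function.surjInv_eq hk u]
  obtain ⟨f, hf₀, hf⟩ := (hlt.comap e).exists_isCut_nat hK b₀
  refine ⟨f ∘ index, by simpa [index] using hf₀, fun u v => ?_⟩
  obtain ⟨hbelow, habove, hbetween⟩ := hf (index u) (index v)
  simp only [he] at hbelow habove hbetween
  exact ⟨hbelow, habove, hbetween⟩

end Cut

section OrderFamily

/-- A family of total vector space preorders on `V`, indexed by the points of `X`, with values in
`K`: the set `h a` consists of the points at which `a` is strictly positive. -/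
structure IsOrderFamily {X V : Type*} [AddCommGroup V] [Module ℚ V] (K : Set (Set X))
    (h : V → Set X) : Prop where
  mem : ∀ a, h a ∈ K
  disjoint_neg : ∀ a, Disjoint (h a) (h (-a))
  add_subset : ∀ a b, h (a + b) ⊆ h a ∪ h b
  smul_eq : ∀ (r : ℚ) (a : V), 0 < r → h (r • a) = h a

variable {X V V' : Type*} [AddCommGroup V] [Module ℚ V] [AddCommGroup V'] [Module ℚ V']
  {K : Set (Set X)} {h : V → Set X}

namespace IsOrderFamily

lemma zero_eq (hh : IsOrderFamily K h) : h 0 = ∅ :=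
  disjoint_self.1 (by simpa using hh.disjoint_neg 0)

lemma notMem_smul (hh : IsOrderFamily K h) {x : X} {r : ℚ} (hr : 0 ≤ r) {a : V} (hx : x ∉ h a) :
    x ∉ h (r • a) := by
  rcases hr.eq_or_lt with rfl | hr
  · simp [hh.zero_eq]
  · rwa [hh.smul_eq r a hr]

lemma notMem_add (hh : IsOrderFamily K h) {x : X} {a b : V} (ha : x ∉ h a) (hb : x ∉ h b) :
    x ∉ h (a + b) :=
  fun hab => (hh.add_subset a b hab).elim ha hb

lemma isPreorderFamily (hh : IsOrderFamily K h) : IsPreorderFamily K fun u v => h (v - u) where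
  mem u v := hh.mem _
  disjoint u v := by simpa using hh.disjoint_neg (v - u)
  subset_union u v w := by simpa [Set.union_comm] using hh.add_subset (w - v) (v - u)

lemma comap (hh : IsOrderFamily K h) (L : V' →ₗ[ℚ] V) : IsOrderFamily K fun a => h (L a) where
  mem a := hh.mem _
  disjoint_neg a := by simpa using hh.disjoint_neg (L a)
  add_subset a b := by simpa using hh.add_subset (L a) (L b)
  smul_eq r a hr := by simpa using hh.smul_eq r (L a) hr

/-- The defining conditions involve at most two vectors, so they may be checked locally. -/
lemma of_local (L : V' →ₗ[ℚ] V)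
    (hloc : ∀ a b, ∃ W : Submodule ℚ V, L a ∈ W ∧ L b ∈ W ∧ IsOrderFamily K fun w : W => h w) :
    IsOrderFamily K fun a => h (L a) where
  mem a := by
    obtain ⟨W, ha, -, hW⟩ := hloc a a
    exact hW.mem ⟨L a, ha⟩
  disjoint_neg a := by
    obtain ⟨W, ha, -, hW⟩ := hloc a a
    simpa using hW.disjoint_neg ⟨L a, ha⟩
  add_subset a b := by
    obtain ⟨W, ha, hb, hW⟩ := hloc a b
    simpa using hW.add_subset ⟨L a, ha⟩ ⟨L b, hb⟩
  smul_eq r a hr := by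
    obtain ⟨W, ha, -, hW⟩ := hloc a a
    simpa using hW.smul_eq r ⟨L a, ha⟩ hr

end IsOrderFamily

/-- The points at which `q (t - u)` is strictly positive, where `b` is the value at `u` of the cut
at which `t` is inserted. The value at `q = 0` is arbitrary. -/
def DisjointPair.side (b : DisjointPair K) (q : ℚ) : Set X :=
  if 0 < q then b.below else b.above

lemma DisjointPair.side_mem (b : DisjointPair K) (q : ℚ) : b.side q ∈ K := by
  unfold DisjointPair.side
  split_ifs
  exacts [b.below_mem, b.above_mem]

lemma DisjointPair.disjoint_side_neg (b : DisjointPair K) {q : ℚ} (hq : q ≠ 0) :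
    Disjoint (b.side q) (b.side (-q)) := by
  rcases hq.lt_or_gt with hq | hq
  · simpa [DisjointPair.side, hq, hq.not_gt] using b.disjoint.symm
  · simpa [DisjointPair.side, hq, hq.not_gt] using b.disjoint

/-- The positivity sets on `V ⊕ ℚ t`, where the new vector `t` is inserted at the cut `f`: for
`q ≠ 0`, the vector `(w, q) = w + q t` is `q (t - u)` with `u = -q⁻¹ w`. -/
def insertAtCut (h : V → Set X) (f : V → DisjointPair K) (a : V × ℚ) : Set X :=
  if a.2 = 0 then h a.1 else (f (-a.2⁻¹ • a.1)).side a.2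

/-- The condition that `q (t - u) ≤ 0` at the point `x`, where `t` is inserted at the cut `f`. -/
def CutNonpos (f : V → DisjointPair K) (x : X) (q : ℚ) (u : V) : Prop :=
  0 ≤ q ∧ x ∉ (f u).below ∨ q ≤ 0 ∧ x ∉ (f u).above

variable {f : V → DisjointPair K} {x : X}

lemma notMem_insertAtCut_iff (hh : IsOrderFamily K h) (hf : IsCut (fun u v => h (v - u)) f)
    {a : V × ℚ} : x ∉ insertAtCut h f a ↔ ∃ u, CutNonpos f x a.2 u ∧ x ∉ h (a.1 + a.2 • u) := by
  obtain ⟨w, q⟩ := a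
  simp only [insertAtCut, CutNonpos, DisjointPair.side]
  constructor
  · intro hx
    split_ifs at hx with hq hpos
    · have hdisj : x ∈ (f 0).below → x ∉ (f 0).above :=
        fun hx => Set.disjoint_left.1 (f 0).disjoint hx
      exact ⟨0, by grind, by simpa⟩
    · exact ⟨-q⁻¹ • w, Or.inl ⟨hpos.le, hx⟩, by simp [smul_smul, hq, hh.zero_eq]⟩
    · exact ⟨-q⁻¹ • w, Or.inr ⟨not_lt.1 hpos, hx⟩, by simp [smul_smul, hq, hh.zero_eq]⟩
  · rintro ⟨u, hu, hx⟩
    split_ifs with hq hpos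
    · simpa [hq] using hx
    · refine fun hbelow => ((hf _ u).below_subset hbelow).elim (hu.resolve_right (by grind)).2 ?_
      have := hh.notMem_smul (inv_nonneg.2 hpos.le) hx
      simpa [smul_smul, hq, add_comm] using this
    · refine fun habove => ((hf _ u).above_subset habove).elim (hu.resolve_left (by grind)).2 ?_
      have := hh.notMem_smul (neg_nonneg.2 (inv_nonpos.2 (not_lt.1 hpos))) hx
      simpa [smul_smul, hq, sub_eq_add_neg] using this

lemma CutNonpos.add (hh : IsOrderFamily K h) (hf : IsCut (fun u v => h (v - u)) f) {q q' : ℚ}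
    {u u' : V} (hu : CutNonpos f x q u) (hu' : CutNonpos f x q' u') :
    CutNonpos f x (q + q') u ∧ x ∉ h (q' • (u - u')) ∨
      CutNonpos f x (q + q') u' ∧ x ∉ h (q • (u' - u)) := by
  have hsmul : ∀ (r : ℚ) v v', 0 ≤ r → x ∉ h (v - v') → x ∉ h (r • (v - v')) :=
    fun r v v' hr => hh.notMem_smul hr
  have hsmul' : ∀ (r : ℚ) v v', r ≤ 0 → x ∉ h (v' - v) → x ∉ h (r • (v - v')) :=
    fun r v v' hr hx => by simpa [← smul_neg] using hh.notMem_smul (neg_nonneg.2 hr) hx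
  have htotal : x ∈ h (u' - u) → x ∉ h (u - u') :=
    fun hx => Set.disjoint_left.1 (hh.isPreorderFamily.disjoint u u') hx
  have hlt := (hf u u').lt_subset (a := x)
  have hlt' := (hf u' u).lt_subset (a := x)
  -- If both coefficients are nonnegative (nonpositive), the lower (upper) of the two vectors works.
  -- Otherwise `t` lies between them, and the one with the larger absolute coefficient works.
  unfold CutNonpos at hu hu' ⊢
  grind

theorem isOrderFamily_insertAtCut (hh : IsOrderFamily K h)
    (hf : IsCut (fun u v => h (v - u)) f) : IsOrderFamily K (insertAtCut h f) where
  mem a := by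
    unfold insertAtCut
    split_ifs
    exacts [hh.mem _, DisjointPair.side_mem _ _]
  disjoint_neg a := by
    by_cases ha : a.2 = 0
    · simpa [insertAtCut, ha] using hh.disjoint_neg a.1
    · simpa [insertAtCut, ha] using (f _).disjoint_side_neg ha
  add_subset a b x := by
    contrapose!
    simp only [Set.mem_union, not_or, notMem_insertAtCut_iff hh hf]
    rintro ⟨⟨u, hu, hxa⟩, v, hv, hxb⟩
    have hab := hh.notMem_add hxa hxb
    rcases hu.add hh hf hv with ⟨huv, hx⟩ | ⟨huv, hx⟩
    · refine ⟨u, huv, ?_⟩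
      convert hh.notMem_add hab hx using 3
      simp only [Prod.fst_add, Prod.snd_add]
      module
    · refine ⟨v, huv, ?_⟩
      convert hh.notMem_add hab hx using 3
      simp only [Prod.fst_add, Prod.snd_add]
      module
  smul_eq r a hr := by
    by_cases ha : a.2 = 0
    · simpa [insertAtCut, ha] using hh.smul_eq r a.1 hr
    · simp [insertAtCut, ha, hr.ne', DisjointPair.side, hr, smul_smul]

end OrderFamily

section Glue

open Finsupp (supported)

variable {X ι : Type*} [LinearOrder ι] {K : Set (Set X)}

/-- The positivity sets on the space with basis `ι` obtained by inserting the basis vectors in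
increasing order, the basis vector `i` being inserted at the cut `D i`. -/
def glueCuts (D : ∀ i : ι, supported ℚ ℚ (Set.Iio i) → DisjointPair K) (a : ι →₀ ℚ) : Set X :=
  {x | ∃ i, IsGreatest (a.support : Set ι) i ∧
    x ∈ (D i (-(a i)⁻¹ • Finsupp.restrictDom ℚ ℚ (Set.Iio i) a)).side (a i)}

variable {D D' : ∀ i : ι, supported ℚ ℚ (Set.Iio i) → DisjointPair K} {i : ι} {a : ι →₀ ℚ}

lemma glueCuts_zero : glueCuts D 0 = ∅ := by
  simp [glueCuts, IsGreatest]

lemma glueCuts_of_isGreatest (ha : IsGreatest (a.support : Set ι) i) :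
    glueCuts D a = (D i (-(a i)⁻¹ • Finsupp.restrictDom ℚ ℚ (Set.Iio i) a)).side (a i) := by
  ext x
  exact ⟨fun ⟨j, hj, hx⟩ => hj.unique ha ▸ hx, fun hx => ⟨i, ha, hx⟩⟩

lemma glueCuts_congr (hD : ∀ j < i, D j = D' j) (ha : a ∈ supported ℚ ℚ (Set.Iio i)) :
    glueCuts D a = glueCuts D' a := by
  ext x
  refine exists_congr fun j => and_congr_right fun hj => ?_
  rw [hD j (ha hj.1)]

lemma glueCuts_eq_insertAtCut (ha : a ∈ supported ℚ ℚ (Set.Iic i)) :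
    glueCuts D a = insertAtCut (fun w : supported ℚ ℚ (Set.Iio i) => glueCuts D w) (D i)
      (Finsupp.restrictDom ℚ ℚ (Set.Iio i) a, a i) := by
  have hle : ∀ j ∈ a.support, j ≤ i := fun j hj => ha hj
  by_cases hi : a i = 0
  · have : a.filter (· ∈ Set.Iio i) = a := Finsupp.filter_eq_self_iff _ _ |>.2 fun j hj =>
      (hle j (Finsupp.mem_support_iff.2 hj)).lt_of_ne (by rintro rfl; exact hj hi)
    rw [insertAtCut, if_pos hi, Finsupp.restrictDom_apply, this]
  · have hgreatest : IsGreatest (a.support : Set ι) i := ⟨by simpa using hi, hle⟩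
    rw [insertAtCut, if_neg hi, glueCuts_of_isGreatest hgreatest]

lemma glueCuts_single (i : ι) : glueCuts D (Finsupp.single i 1) = (D i 0).below := by
  have hi : Finsupp.restrictDom ℚ ℚ (Set.Iio i) (Finsupp.single i 1) = 0 := by
    ext j
    simp [Finsupp.restrictDom_apply]
  have : IsGreatest ((Finsupp.single i (1 : ℚ)).support : Set ι) i := by simp
  simp [glueCuts_of_isGreatest this, hi, DisjointPair.side]

lemma isOrderFamily_glueCuts_Iic
    (hD : IsOrderFamily K fun w : supported ℚ ℚ (Set.Iio i) => glueCuts D w)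
    (hcut : IsCut (fun u v : supported ℚ ℚ (Set.Iio i) => glueCuts D ↑(v - u)) (D i)) :
    IsOrderFamily K fun w : supported ℚ ℚ (Set.Iic i) => glueCuts D w := by
  simp_rw [fun w : supported ℚ ℚ (Set.Iic i) => glueCuts_eq_insertAtCut (D := D) w.2]
  exact (isOrderFamily_insertAtCut hD hcut).comap
    (((Finsupp.restrictDom ℚ ℚ (Set.Iio i)).prod (Finsupp.lapply i)).comp (Submodule.subtype _))

lemma isOrderFamily_glueCuts_of_Iic (hK : ∅ ∈ K) {V : Type*} [AddCommGroup V] [Module ℚ V]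
    (L : V →ₗ[ℚ] ι →₀ ℚ) (hL : ∀ a, ∀ i ∈ (L a).support,
      IsOrderFamily K fun w : supported ℚ ℚ (Set.Iic i) => glueCuts D w) :
    IsOrderFamily K fun a => glueCuts D (L a) := by
  refine .of_local L fun a b => ?_
  rcases ((L a).support ∪ (L b).support).eq_empty_or_nonempty with hab | hab
  · simp only [Finset.union_eq_empty, Finsupp.support_eq_empty] at hab
    refine ⟨⊥, hab.1, hab.2, fun w => ?_, fun w => ?_, fun w w' => ?_, fun r w _ => ?_⟩ <;>
      simp [Submodule.eq_zero_of_bot_submodule, glueCuts_zero, hK]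
  · have hmax := Finset.max'_mem _ hab
    have hle := Finset.le_max' ((L a).support ∪ (L b).support)
    refine ⟨supported ℚ ℚ (Set.Iic (Finset.max' _ hab)),
      fun j hj => hle j (Finset.mem_union_left _ hj),
      fun j hj => hle j (Finset.mem_union_right _ hj),
      (Finset.mem_union.1 hmax).elim (hL a _) (hL b _)⟩

lemma isOrderFamily_glueCuts_Iio [WellFoundedLT ι] (hK : ∅ ∈ K) (i : ι)
    (hcut : ∀ j < i, IsCut (fun u v : supported ℚ ℚ (Set.Iio j) => glueCuts D ↑(v - u)) (D j)) :
    IsOrderFamily K fun w : supported ℚ ℚ (Set.Iio i) => glueCuts D w := by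
  induction i using WellFoundedLT.induction with
  | ind i ih =>
    refine isOrderFamily_glueCuts_of_Iic hK (Submodule.subtype _) fun a j hj => ?_
    have hji : j < i := a.2 hj
    exact isOrderFamily_glueCuts_Iic (ih j hji fun k hk => hcut k (hk.trans hji)) (hcut j hji)

theorem exists_isOrderFamily_single_eq [WellFoundedLT ι] (hK : IsCompletelyNormalFamily K)
    (hι : ∀ i : ι, (Set.Iio i).Countable) {c : ι → Set X} (hc : ∀ i, c i ∈ K) :
    ∃ h : (ι →₀ ℚ) → Set X, IsOrderFamily K h ∧ ∀ i, h (Finsupp.single i 1) = c i := by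
  let b (i : ι) : DisjointPair K := ⟨c i, ∅, hc i, hK.empty_mem, Set.disjoint_empty _⟩
  have : ∀ i : ι, Nonempty (supported ℚ ℚ (Set.Iio i) → DisjointPair K) := fun i => ⟨fun _ => b i⟩
  obtain ⟨D, hD⟩ := exists_forall_of_forall_lt
    (R := fun i (D : ∀ i : ι, supported ℚ ℚ (Set.Iio i) → DisjointPair K) f => f 0 = b i ∧
      IsCut (fun u v : supported ℚ ℚ (Set.Iio i) => glueCuts D ↑(v - u)) f)
    (fun i D D' f hDD' hf => ⟨hf.1, by
      simpa only [glueCuts_congr hDD' (Subtype.coe_prop _)] using hf.2⟩) fun i D hD => by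
      have : Countable (Set.Iio i) := hι i
      have : Countable (supported ℚ ℚ (Set.Iio i)) :=
        (Finsupp.supportedEquivFinsupp (Set.Iio i)).toEquiv.countable_iff.2 inferInstance
      exact (isOrderFamily_glueCuts_Iio hK.empty_mem i fun j hj => (hD j hj).2)
        |>.isPreorderFamily.exists_isCut hK 0 (b i)
  refine ⟨glueCuts D, isOrderFamily_glueCuts_of_Iic hK.empty_mem LinearMap.id fun _ i _ => ?_,
    fun i => by rw [glueCuts_single, (hD i).1]⟩
  exact isOrderFamily_glueCuts_Iic
    (isOrderFamily_glueCuts_Iio hK.empty_mem i fun j _ => (hD j).2) (hD i).2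

end Glue

section TotalCone

variable {V : Type*} [AddCommGroup V] {C : AddSubmonoid V}

/-- The image of a cone in the quotient by its support. -/
def supportQuotientCone (C : AddSubmonoid V) : AddGroupCone (V ⧸ C.support) where
  toAddSubmonoid := C.map (QuotientAddGroup.mk' C.support)
  eq_zero_of_mem_of_neg_mem' := by
    rintro _ ⟨a, ha, rfl⟩ ⟨b, hb, hab⟩
    have hab' : b + a ∈ C.support := by
      simpa [eq_neg_iff_add_eq_zero, ← QuotientAddGroup.mk_add] using hab
    exact (QuotientAddGroup.eq_zero_iff a).2 ⟨ha, by simpa using C.add_mem hb hab'.2⟩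

lemma mk_mem_supportQuotientCone {a : V} :
    (a : V ⧸ C.support) ∈ supportQuotientCone C ↔ a ∈ C := by
  refine ⟨?_, fun ha => ⟨a, ha, rfl⟩⟩
  rintro ⟨b, hb, hab⟩
  simpa using C.add_mem hb (QuotientAddGroup.eq.1 hab).1

lemma exists_nonneg_iff_mem_of_isSpanning (hC : C.IsSpanning) :
    ∃ (_ : LinearOrder (V ⧸ C.support)), IsOrderedAddMonoid (V ⧸ C.support) ∧
      ∀ a : V, 0 ≤ (a : V ⧸ C.support) ↔ a ∈ C := by
  classical
  have : HasMemOrNegMem (supportQuotientCone C) := ⟨fun a => by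
    induction a using QuotientAddGroup.induction_on with
    | H a => simpa only [← QuotientAddGroup.mk_neg, mk_mem_supportQuotientCone] using hC a⟩
  refine ⟨.mkOfAddGroupCone (supportQuotientCone C), .mkOfCone (supportQuotientCone C), fun a => ?_⟩
  change (a : V ⧸ C.support) - 0 ∈ supportQuotientCone C ↔ _
  rw [sub_zero, mk_mem_supportQuotientCone]

theorem IsOrderFamily.exists_pos_eq {X : Type*} {V : Type u} [AddCommGroup V] [Module ℚ V]
    {K : Set (Set X)} {h : V → Set X} (hh : IsOrderFamily K h) :
    ∃ (T : X → Type u) (_ : ∀ x, AddCommGroup (T x)) (_ : ∀ x, LinearOrder (T x))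
      (_ : ∀ x, IsOrderedAddMonoid (T x)) (φ : V →+ ∀ x, T x), ∀ a, {x | 0 < φ a x} = h a := by
  let C (x : X) : AddSubmonoid V :=
    { carrier := {a | x ∉ h (-a)}
      zero_mem' := by simp [hh.zero_eq]
      add_mem' := fun ha hb => by simpa [add_comm] using hh.notMem_add ha hb }
  have hC : ∀ x, (C x).IsSpanning := fun x a =>
    or_iff_not_imp_left.2 fun ha => Set.disjoint_left.1 (hh.disjoint_neg (-a)) (not_not.1 ha)
  choose order ordered hnonneg using fun x => exists_nonneg_iff_mem_of_isSpanning (hC x)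
  refine ⟨fun x => V ⧸ (C x).support, inferInstance, order, ordered,
    AddMonoidHom.pi fun x => QuotientAddGroup.mk' (C x).support, fun a => Set.ext fun x => ?_⟩
  have hneg : 0 ≤ -(a : V ⧸ (C x).support) ↔ x ∉ h (- -a) := hnonneg x (-a)
  rw [neg_neg, Left.nonneg_neg_iff] at hneg
  exact not_le.symm.trans (not_iff_comm.1 hneg.symm)

end TotalCone

section LatticeSubgroup

/-- The `ℓ`-subgroup generated by a subgroup, which is the sublattice generated by it. -/
def latticeSubgroup {L : Type*} [Lattice L] [AddCommGroup L] [IsOrderedAddMonoid L]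
    (H : AddSubgroup L) : AddSubgroup L where
  carrier := latticeClosure H
  zero_mem' := subset_latticeClosure H.zero_mem
  add_mem' {a b} ha hb := by
    have hmaps : ∀ c, Set.MapsTo (c + ·) H (latticeClosure H) →
        Set.MapsTo (c + ·) (latticeClosure H) (latticeClosure (H : Set L)) := fun c hc => by
      rw [Set.mapsTo_iff_image_subset, image_latticeClosure _ _ (fun _ _ => add_sup _ _ _)
        fun _ _ => add_inf _ _ _]
      exact latticeClosure_min hc.image_subset isSublattice_latticeClosure
    refine hmaps a (fun c hc => ?_) hb
    simpa only [add_comm] using hmaps c (fun d hd => subset_latticeClosure (H.add_mem hc hd)) ha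
  neg_mem' {a} ha := by
    have hneg := image_latticeClosure' (H : Set L) Neg.neg neg_sup neg_inf
    rw [Set.image_neg_eq_neg, Set.image_neg_eq_neg, neg_coe_set] at hneg
    rwa [← hneg] at ha

variable {L : Type*} [Lattice L] [AddCommGroup L] [IsOrderedAddMonoid L]

instance (H : AddSubgroup L) : Lattice (latticeSubgroup H) :=
  Subtype.lattice (fun _ _ h₁ h₂ => isSublattice_latticeClosure.supClosed h₁ h₂)
    fun _ _ h₁ h₂ => isSublattice_latticeClosure.infClosed h₁ h₂

instance (H : AddSubgroup L) : IsOrderedAddMonoid (latticeSubgroup H) :=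
  (latticeSubgroup H).toIsOrderedAddMonoid

variable {X : Type*} {K : Set (Set X)} {T : X → Type*} [∀ x, AddCommGroup (T x)]
  [∀ x, LinearOrder (T x)] [∀ x, IsOrderedAddMonoid (T x)] {H : AddSubgroup (∀ x, T x)}

lemma range_setOf_ne_zero_latticeSubgroup (hK : IsSublattice K)
    (hH : (fun g : ∀ x, T x => {x | 0 < g x}) '' H = K) :
    (Set.range fun g : latticeSubgroup H => {x | g.1 x ≠ 0}) = K := by
  have hpos : latticeClosure (H : Set (∀ x, T x)) ⊆ {g | {x | 0 < g x} ∈ K} := by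
    refine latticeClosure_min (fun g hg => hH.subset ⟨g, hg, rfl⟩)
      ⟨fun f hf g hg => ?_, fun f hf g hg => ?_⟩
    · simpa [Set.ofPred_or] using hK.supClosed hf hg
    · simpa [Set.ofPred_and] using hK.infClosed hf hg
  refine Set.Subset.antisymm ?_ fun U hU => ?_
  · rintro _ ⟨g, rfl⟩
    convert hK.supClosed (hpos g.2) (hpos (-g).2) using 1
    ext x
    simp [lt_or_lt_iff_ne, eq_comm]
  · obtain ⟨g, hg, rfl⟩ := hH.symm.subset hU
    refine ⟨⟨g, subset_latticeClosure hg⟩ ⊔ 0, Set.ext fun x => ?_⟩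
    exact sup_eq_right.not.trans not_le

end LatticeSubgroup

section LSpectrum

variable {G : Type*} [Lattice G] [AddCommGroup G]

lemma IsLIdeal.abs_mem_iff [IsOrderedAddMonoid G] {P : Set G} (hP : IsLIdeal P) {a : G} :
    |a| ∈ P ↔ a ∈ P := by
  have h : |a| ⊔ -|a| = a ⊔ -a := abs_abs a
  exact ⟨fun ha => hP.2.2.2 a |a| ha h.ge, fun ha => hP.2.2.2 |a| a ha h.le⟩

lemma IsPrimeLIdeal.inf_abs_mem_iff [IsOrderedAddMonoid G] {P : Set G} (hP : IsPrimeLIdeal P)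
    {a b : G} : |a| ⊓ |b| ∈ P ↔ a ∈ P ∨ b ∈ P := by
  have habs : |(|a| ⊓ |b|)| = |a| ⊓ |b| := abs_of_nonneg (le_inf (abs_nonneg a) (abs_nonneg b))
  refine ⟨fun h => ?_, ?_⟩
  · rw [← hP.1.abs_mem_iff, ← hP.1.abs_mem_iff (a := b)]
    exact hP.2.2 _ _ h
  · rintro (h | h)
    · exact hP.1.2.2.2 _ a h (habs.le.trans inf_le_left)
    · exact hP.1.2.2.2 _ b h (habs.le.trans inf_le_right)

lemma isPrimeLIdeal_ker {T : Type*} [AddCommGroup T] [LinearOrder T] [IsOrderedAddMonoid T]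
    {π : G →+ T} (hsup : ∀ a b, π (a ⊔ b) = π a ⊔ π b) (hinf : ∀ a b, π (a ⊓ b) = π a ⊓ π b)
    (hπ : π ≠ 0) : IsPrimeLIdeal (π.ker : Set G) := by
  refine ⟨⟨π.ker.zero_mem, fun _ _ => π.ker.add_mem, fun _ => π.ker.neg_mem, ?_⟩, ?_, ?_⟩
  · intro a b hb hab
    have habs : |π a| ≤ |π b| := by
      simpa [← sup_eq_right, ← hsup, abs, ← map_neg] using congrArg π (sup_eq_right.2 hab)
    rw [SetLike.mem_coe, AddMonoidHom.mem_ker] at hb ⊢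
    rwa [hb, abs_zero, abs_nonpos_iff] at habs
  · exact fun h => hπ <| AddMonoidHom.ext fun a => h.symm.subset (Set.mem_univ a)
  · intro a b hab
    rw [SetLike.mem_coe, AddMonoidHom.mem_ker, hinf] at hab
    exact (min_choice (π a) (π b)).imp (·.symm.trans hab) (·.symm.trans hab)

namespace LSpectrum

/-- The basic open set of the `ℓ`-spectrum determined by `a`. -/
def basicOpen (a : G) : Set (LSpectrum G) :=
  {P | a ∉ P.1}

lemma isOpen_basicOpen (a : G) : IsOpen (basicOpen a) :=
  TopologicalSpace.isOpen_generateFrom_of_mem ⟨a, rfl⟩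

lemma isPrimeLIdeal_eventually_mem (f : Ultrafilter (LSpectrum G))
    (hf : ∃ a, ∀ᶠ P : LSpectrum G in f, a ∉ P.1) :
    IsPrimeLIdeal {a | ∀ᶠ P : LSpectrum G in f, a ∈ P.1} := by
  refine ⟨⟨.of_forall fun P => P.2.1.1, fun a b ha hb => ?_, fun a ha => ?_, fun a b hb hab => ?_⟩,
    fun h => ?_, fun a b hab => Ultrafilter.eventually_or.1 ?_⟩
  · filter_upwards [ha, hb] with P using P.2.1.2.1 a b
  · filter_upwards [ha] with P using P.2.1.2.2.1 a
  · filter_upwards [hb] with P hb using P.2.1.2.2.2 a b hb hab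
  · obtain ⟨a, ha⟩ := hf
    exact Ultrafilter.eventually_not.1 ha (h.symm.subset (Set.mem_univ a))
  · filter_upwards [hab] with P using P.2.2.2 a b

lemma isCompact_basicOpen (a : G) : IsCompact (basicOpen a) := by
  rw [isCompact_iff_ultrafilter_le_nhds']
  intro f hf
  refine ⟨⟨_, isPrimeLIdeal_eventually_mem f ⟨a, hf⟩⟩, Ultrafilter.eventually_not.1 hf, ?_⟩
  refine le_trans (le_iInf₂ fun U hU => ?_) TopologicalSpace.nhds_generateFrom.ge
  obtain ⟨hPU, b, rfl⟩ := hU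
  exact Filter.le_principal_iff.2 (Ultrafilter.eventually_not.2 hPU)

variable [IsOrderedAddMonoid G]

lemma isTopologicalBasis_range_basicOpen :
    TopologicalSpace.IsTopologicalBasis (Set.range (basicOpen (G := G))) where
  exists_subset_inter := by
    rintro _ ⟨a, rfl⟩ _ ⟨b, rfl⟩ P hP
    have hab : basicOpen (|a| ⊓ |b|) = basicOpen a ∩ basicOpen b := Set.ext fun Q =>
      Q.2.inf_abs_mem_iff.not.trans not_or
    exact ⟨_, ⟨|a| ⊓ |b|, rfl⟩, hab.symm.subset hP, hab.subset⟩
  sUnion_eq := by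
    refine Set.eq_univ_of_forall fun P => ?_
    obtain ⟨a, ha⟩ := (Set.ne_univ_iff_exists_notMem _).1 P.2.2.1
    exact ⟨_, ⟨a, rfl⟩, ha⟩
  eq_generateFrom := by
    change TopologicalSpace.generateFrom _ = _
    congr 1
    ext U
    exact exists_congr fun a => eq_comm

variable {X : Type*} {K : Set (Set X)} {e : X → LSpectrum G}

lemma isInducing_of_range_preimage_basicOpen [TopologicalSpace X]
    (hbasis : TopologicalSpace.IsTopologicalBasis K)
    (he : (Set.range fun a => e ⁻¹' basicOpen a) = K) : Topology.IsInducing e := by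
  refine ⟨?_⟩
  rw [hbasis.eq_generateFrom, isTopologicalBasis_range_basicOpen.eq_generateFrom,
    induced_generateFrom_eq, ← Set.range_comp, ← he]
  rfl

lemma preimage_mem_of_isCompact_of_isOpen (hempty : ∅ ∈ K) (hsup : SupClosed K)
    (he : ∀ a, e ⁻¹' basicOpen a ∈ K) {U : Set (LSpectrum G)} (hUc : IsCompact U)
    (hUo : IsOpen U) : e ⁻¹' U ∈ K := by
  obtain ⟨s, hs, rfl⟩ := eq_finite_iUnion_of_isTopologicalBasis_of_isCompact_open _
    isTopologicalBasis_range_basicOpen U hUc hUo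
  rw [Set.preimage_iUnion₂]
  exact hsup.biSup_mem hs hempty fun a _ => he a

end LSpectrum

end LSpectrum

section Embedding

variable {X : Type*} {T : X → Type*} [∀ x, AddCommGroup (T x)] [∀ x, LinearOrder (T x)]
  [∀ x, IsOrderedAddMonoid (T x)]

/-- The prime `ℓ`-ideal of the elements vanishing at the coordinate `x`. -/
def coordinateIdeal {H : AddSubgroup (∀ x, T x)}
    (hH : ∀ x, ∃ g : latticeSubgroup H, g.1 x ≠ 0) (x : X) : LSpectrum (latticeSubgroup H) :=
  ⟨((Pi.evalAddMonoidHom T x).comp (latticeSubgroup H).subtype).ker,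
    isPrimeLIdeal_ker (fun _ _ => rfl) (fun _ _ => rfl) fun h =>
      (hH x).elim fun g hg => hg (DFunLike.congr_fun h g)⟩

end Embedding

section Cardinality

lemma exists_surjective_of_mk_le_aleph_one {α : Type u} [Nonempty α]
    (hα : Cardinal.mk α ≤ Cardinal.aleph 1) :
    ∃ (ι : Type u) (_ : LinearOrder ι) (_ : WellFoundedLT ι) (c : ι → α),
      (∀ i : ι, (Set.Iio i).Countable) ∧ Function.Surjective c := by
  let ι : Type u := (Cardinal.aleph.{u} 1).ord.ToType
  have hι : Cardinal.mk ι = Cardinal.aleph 1 := by simp [ι]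
  obtain ⟨f⟩ : Cardinal.mk α ≤ Cardinal.mk ι := hα.trans_eq hι.symm
  refine ⟨ι, inferInstance, inferInstance, Function.invFun f, fun i => ?_,
    Function.invFun_surjective f.injective⟩
  rw [← Cardinal.le_aleph0_iff_set_countable, ← Order.lt_succ_iff, Cardinal.succ_aleph0]
  exact (Cardinal.mk_Iio_lt i (by simp [ι])).trans_eq hι

end Cardinality

theorem IsCompletelyNormalFamily.exists_isOrderFamily_range_eq {X : Type u} {K : Set (Set X)}
    (hK : IsCompletelyNormalFamily K) (hcard : Cardinal.mk K ≤ Cardinal.aleph 1) :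
    ∃ (ι : Type u) (h : (ι →₀ ℚ) → Set X), IsOrderFamily K h ∧ Set.range h = K := by
  have : Nonempty K := ⟨⟨∅, hK.empty_mem⟩⟩
  obtain ⟨ι, _, _, c, hι, hc⟩ := exists_surjective_of_mk_le_aleph_one hcard
  obtain ⟨h, hh, hsingle⟩ := exists_isOrderFamily_single_eq hK hι fun i => (c i).2
  refine ⟨ι, h, hh, Set.Subset.antisymm (Set.range_subset_iff.2 hh.mem) fun U hU => ?_⟩
  obtain ⟨i, hi⟩ := hc ⟨U, hU⟩
  exact ⟨Finsupp.single i 1, by rw [hsingle, hi]⟩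

lemma isCompletelyNormalFamily_isCompact_isOpen {X : Type*} [TopologicalSpace X]
    (hinter : ∀ U V : Set X, IsCompact U → IsOpen U → IsCompact V → IsOpen V →
      IsCompact (U ∩ V))
    (hcn : ∀ U V : Set X, IsCompact U → IsOpen U → IsCompact V → IsOpen V →
      ∃ W Z : Set X, (IsCompact W ∧ IsOpen W) ∧ (IsCompact Z ∧ IsOpen Z) ∧
        U ∪ V = U ∪ Z ∧ U ∪ V = W ∪ V ∧ W ∩ Z = ∅) :
    IsCompletelyNormalFamily {U : Set X | IsCompact U ∧ IsOpen U} where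
  supClosed _ hU _ hV := ⟨hU.1.union hV.1, hU.2.union hV.2⟩
  infClosed U hU V hV := ⟨hinter U V hU.1 hU.2 hV.1 hV.2, hU.2.inter hV.2⟩
  empty_mem := ⟨isCompact_empty, isOpen_empty⟩
  exists_split U hU V hV := by
    obtain ⟨W, Z, hW, hZ, h⟩ := hcn U V hU.1 hU.2 hV.1 hV.2
    exact ⟨W, hW, Z, hZ, h⟩

theorem stmt2_general {X : Type u} [TopologicalSpace X] [T0Space X] {K : Set (Set X)}
    (hbasis : TopologicalSpace.IsTopologicalBasis K) (hK : IsCompletelyNormalFamily K)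
    (hcard : Cardinal.mk K ≤ Cardinal.aleph 1) :
    ∃ (G : AbelianLGroup.{u}) (e : X → LSpectrum G.carrier),
      Topology.IsEmbedding e ∧
      (∀ U : Set (LSpectrum G.carrier), IsCompact U → IsOpen U → e ⁻¹' U ∈ K) ∧
      (∀ V ∈ K, ∃ U : Set (LSpectrum G.carrier), IsCompact U ∧ IsOpen U ∧ e ⁻¹' U = V) := by
  obtain ⟨ι, h, hh, hrange⟩ := hK.exists_isOrderFamily_range_eq hcard
  obtain ⟨T, _, _, _, φ, hφ⟩ := hh.exists_pos_eq
  have hpos : (fun g : ∀ x, T x => {x | 0 < g x}) '' φ.range = K := by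
    rw [AddMonoidHom.coe_range, ← Set.range_comp, ← hrange, ← funext hφ]
    rfl
  have hne := range_setOf_ne_zero_latticeSubgroup hK.toIsSublattice hpos
  have hcover : ∀ x, ∃ g : latticeSubgroup φ.range, g.1 x ≠ 0 := fun x => by
    obtain ⟨_, hU, hxU, -⟩ := hbasis.exists_subset_of_mem_open (Set.mem_univ x) isOpen_univ
    obtain ⟨g, rfl⟩ := hne.symm.subset hU
    exact ⟨g, hxU⟩
  have he : (Set.range fun g => coordinateIdeal hcover ⁻¹' LSpectrum.basicOpen g) = K := hne
  refine ⟨⟨latticeSubgroup φ.range, fun _ _ hab c => add_le_add_right hab c⟩,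
    coordinateIdeal hcover,
    (LSpectrum.isInducing_of_range_preimage_basicOpen hbasis he).isEmbedding, fun U hUc hUo => ?_,
    fun V hV => ?_⟩
  · exact LSpectrum.preimage_mem_of_isCompact_of_isOpen hK.empty_mem hK.supClosed
      (fun g => he.subset ⟨g, rfl⟩) hUc hUo
  · obtain ⟨g, hg⟩ := he.symm.subset hV
    exact ⟨_, LSpectrum.isCompact_basicOpen g, LSpectrum.isOpen_basicOpen g, hg⟩

/-- every completely normal generalized spectral space with at most `ℵ₁`
compact open sets embeds, as a spectral subspace, into the `ℓ`-spectrum of some Abelian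
`ℓ`-group.  "Generalized spectral" is: sober (`T0` + quasi-sober) with the compact open
sets forming a basis closed under finite intersections; "completely normal" refers to the
lattice of compact open sets; "spectral subspace" means a topological embedding such that
the preimage map is a surjection from the compact open sets of the `ℓ`-spectrum onto
those of `X`. -/
theorem stmt2 (X : Type u) [TopologicalSpace X] [T0Space X] [QuasiSober X]
    (hbasis : TopologicalSpace.IsTopologicalBasis {U : Set X | IsCompact U ∧ IsOpen U})
    (hinter : ∀ U V : Set X, IsCompact U → IsOpen U → IsCompact V → IsOpen V →
      IsCompact (U ∩ V))
    (hcn : ∀ U V : Set X, IsCompact U → IsOpen U → IsCompact V → IsOpen V →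
      ∃ W Z : Set X, (IsCompact W ∧ IsOpen W) ∧ (IsCompact Z ∧ IsOpen Z) ∧
        U ∪ V = U ∪ Z ∧ U ∪ V = W ∪ V ∧ W ∩ Z = ∅)
    (hcard : Cardinal.mk {U : Set X // IsCompact U ∧ IsOpen U} ≤ Cardinal.aleph 1) :
    ∃ (G : AbelianLGroup.{u}) (e : X → LSpectrum G.carrier),
      Topology.IsEmbedding e ∧
      (∀ U : Set (LSpectrum G.carrier), IsCompact U → IsOpen U →
        IsCompact (e ⁻¹' U) ∧ IsOpen (e ⁻¹' U)) ∧
      (∀ V : Set X, IsCompact V → IsOpen V →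
        ∃ U : Set (LSpectrum G.carrier), IsCompact U ∧ IsOpen U ∧ e ⁻¹' U = V) := by
  obtain ⟨G, e, he, hpre, hsurj⟩ :=
    stmt2_general hbasis (isCompletelyNormalFamily_isCompact_isOpen hinter hcn) hcard
  exact ⟨G, e, he, hpre, fun V hVc hVo => hsurj V ⟨hVc, hVo⟩⟩
end

section
/- Let k be a totally ordered division ring, let I and J be sets, let L be a completely normal distributive 0-lattice, let D be a finite subset of k^(J), and let e ∈ k^(J). Then every top-faithful 0-lattice homomorphism f : Op(k^(I) ∪ D, k^(J)) → L ∪ {∞} extends to a top-faithful lattice homomorphism g : Op(k^(I) ∪ D ∪ {e}, k^(J)) → L ∪ {∞}. -/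
/-- The linear functional `x ↦ Σ_i a_i * x_i` on `k^(ι)` associated with `a ∈ k^(ι)`. -/
def pairing {k ι : Type*} [DivisionRing k] (a x : ι →₀ k) : k :=
  a.sum fun i c => c * x i

/-- The vectors of `k^(ι)` supported on a subset `I ⊆ ι` (the copy of `k^(I)`
inside `k^(ι)`). -/
def suppIn {k ι : Type*} [Zero k] (I : Set ι) : Set (ι →₀ k) :=
  {y : ι →₀ k | ∀ i, i ∉ I → y i = 0}

/-- Membership in `Op⁻(A, k^(ι))`: the sublattice of the powerset of `k^(ι)` generated
by the sets `⟦a > 0⟧` and `⟦a < 0⟧` for `a ∈ A`. -/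
inductive MemOp {k ι : Type*} [DivisionRing k] [LinearOrder k]
    (A : Set (ι →₀ k)) : Set (ι →₀ k) → Prop
  | pos (a : ι →₀ k) (ha : a ∈ A) : MemOp A {x : ι →₀ k | 0 < pairing a x}
  | neg (a : ι →₀ k) (ha : a ∈ A) : MemOp A {x : ι →₀ k | pairing a x < 0}
  | union {U V : Set (ι →₀ k)} : MemOp A U → MemOp A V → MemOp A (U ∪ V)
  | inter {U V : Set (ι →₀ k)} : MemOp A U → MemOp A V → MemOp A (U ∩ V)

/-- Membership in `Op(A, k^(ι)) = Op⁻(A, k^(ι)) ∪ {k^(ι)}`, a bounded lattice with top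
element the full space. -/
def MemOpTop {k ι : Type*} [DivisionRing k] [LinearOrder k]
    (A : Set (ι →₀ k)) (U : Set (ι →₀ k)) : Prop :=
  MemOp A U ∨ U = Set.univ

/-!
Write `M = Op(k^(I) ∪ D)`, `P = ⟦e > 0⟧` and `N = ⟦e < 0⟧`. Since `P` and `N` are disjoint, every
member of `Op(k^(I) ∪ D ∪ {e})` has the form `a ∪ (b ∩ P) ∪ (c ∩ N)` with `a, b, c ∈ M`, so an
extension of `f` is determined by the images `u`, `v` of `P`, `N`, and what has to be checked is
that the resulting values do not depend on the representation.

Eliminating the finitely many coordinates outside `I` on which `D` and `e` depend yields a finite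
`F ⊆ k^(I) ∪ D` such that the sign pattern of `k^(I) ∪ D` at `x` and the sign of `e` at `z` occur at
a common point whenever `x` and `z` lie in the same `F`-cell. Hence the members of `M` cannot
distinguish `P` from the union `p` of the `F`-cells meeting it, nor `N` from the analogous `n`; and
as `e` vanishes somewhere on each cell contained in `p ∩ n`, such a cell is not covered by `P ∪ N`.
This leaves room to shrink `f p`, `f n` to disjoint `u`, `v` by complete normality. By the symmetry
`x ↦ -x`, `p` and `n` are either both or neither the whole space, so top-faithfulness of `f` gives
`f p = ∞ ↔ f n = ∞`, which allows `u` and `v` to be taken in `L`.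
-/

/-! ### Extending lattice homomorphisms -/

theorem normalForm_inf_normalForm {F : Type*} [DistribLattice F] [OrderBot F] {p q : F}
    (hpq : Disjoint p q) (a b c a' b' c' : F) :
    (a ⊔ b ⊓ p ⊔ c ⊓ q) ⊓ (a' ⊔ b' ⊓ p ⊔ c' ⊓ q) =
      a ⊓ a' ⊔ (a ⊓ b' ⊔ b ⊓ a' ⊔ b ⊓ b') ⊓ p ⊔ (a ⊓ c' ⊔ c ⊓ a' ⊔ c ⊓ c') ⊓ q := by
  have h₁ : b ⊓ p ⊓ (c' ⊓ q) = ⊥ := by rw [inf_inf_inf_comm, hpq.eq_bot, inf_bot_eq]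
  have h₂ : c ⊓ q ⊓ (b' ⊓ p) = ⊥ := by rw [inf_inf_inf_comm, hpq.symm.eq_bot, inf_bot_eq]
  have h₃ : b ⊓ p ⊓ (b' ⊓ p) = b ⊓ b' ⊓ p := by rw [inf_inf_inf_comm, inf_idem]
  have h₄ : c ⊓ q ⊓ (c' ⊓ q) = c ⊓ c' ⊓ q := by rw [inf_inf_inf_comm, inf_idem]
  simp only [inf_sup_left, inf_sup_right, h₁, h₂, h₃, h₄, sup_bot_eq]
  simp only [inf_assoc, inf_comm p, inf_comm q]
  ac_rfl

/-- The sublattice of all `a ⊔ b ⊓ p ⊔ c ⊓ q` with `a, b, c ∈ S`. When `⊥, ⊤ ∈ S`, it is the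
sublattice generated by `S`, `p` and `q`. -/
def adjoinDisjoint {F : Type*} [DistribLattice F] [OrderBot F] (S : Sublattice F) {p q : F}
    (hpq : Disjoint p q) : Sublattice F where
  carrier := {z | ∃ a ∈ S, ∃ b ∈ S, ∃ c ∈ S, a ⊔ b ⊓ p ⊔ c ⊓ q = z}
  supClosed' := by
    rintro _ ⟨a, ha, b, hb, c, hc, rfl⟩ _ ⟨a', ha', b', hb', c', hc', rfl⟩
    refine ⟨_, S.sup_mem ha ha', _, S.sup_mem hb hb', _, S.sup_mem hc hc', ?_⟩
    rw [inf_sup_right, inf_sup_right, sup_sup_sup_comm (a ⊔ b ⊓ p), sup_sup_sup_comm a]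
  infClosed' := by
    rintro _ ⟨a, ha, b, hb, c, hc, rfl⟩ _ ⟨a', ha', b', hb', c', hc', rfl⟩
    have mem {d d'} (hd : d ∈ S) (hd' : d' ∈ S) : a ⊓ d' ⊔ d ⊓ a' ⊔ d ⊓ d' ∈ S :=
      S.sup_mem (S.sup_mem (S.inf_mem ha hd') (S.inf_mem hd ha')) (S.inf_mem hd hd')
    exact ⟨_, S.inf_mem ha ha', _, mem hb hb', _, mem hc hc',
      (normalForm_inf_normalForm hpq a b c a' b' c').symm⟩

section Adjoin

variable {F : Type*} [DistribLattice F] {S : Sublattice F} {p q : F}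

theorem le_adjoinDisjoint [OrderBot F] (hpq : Disjoint p q) (hbot : ⊥ ∈ S) :
    S ≤ adjoinDisjoint S hpq :=
  fun z hz => ⟨z, hz, ⊥, hbot, ⊥, hbot, by simp⟩

theorem left_mem_adjoinDisjoint [BoundedOrder F] (hpq : Disjoint p q) (hbot : ⊥ ∈ S)
    (htop : ⊤ ∈ S) : p ∈ adjoinDisjoint S hpq :=
  ⟨⊥, hbot, ⊤, htop, ⊥, hbot, by simp⟩

theorem right_mem_adjoinDisjoint [BoundedOrder F] (hpq : Disjoint p q) (hbot : ⊥ ∈ S)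
    (htop : ⊤ ∈ S) : q ∈ adjoinDisjoint S hpq :=
  ⟨⊥, hbot, ⊥, hbot, ⊤, htop, by simp⟩

end Adjoin

/-- `f` restricts to a lattice homomorphism on the sublattice `M`; its values outside `M` are
irrelevant. -/
def IsLatticeHomOn {E K : Type*} [Lattice E] [Lattice K] (f : E → K) (M : Sublattice E) : Prop :=
  ∀ a b : E, a ∈ M → b ∈ M → f (a ⊔ b) = f a ⊔ f b ∧ f (a ⊓ b) = f a ⊓ f b

section Graph

variable {E K : Type*} [Lattice E] [Lattice K] {M : Sublattice E} {f : E → K}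

theorem IsLatticeHomOn.monotoneOn (hf : IsLatticeHomOn f M) : MonotoneOn f M :=
  fun a ha b hb hab => by rw [← sup_eq_right, ← (hf a b ha hb).1, sup_eq_right.mpr hab]

theorem IsLatticeHomOn.mono {M' : Sublattice E} (hf : IsLatticeHomOn f M) (h : M' ≤ M) :
    IsLatticeHomOn f M' :=
  fun a b ha hb => hf a b (h ha) (h hb)

/-- The graph of a lattice homomorphism `f` on `M`, as a sublattice of `E × K`. -/
def IsLatticeHomOn.graph (hf : IsLatticeHomOn f M) : Sublattice (E × K) where
  carrier := (fun a => (a, f a)) '' M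
  supClosed' := by
    rintro _ ⟨a, ha, rfl⟩ _ ⟨b, hb, rfl⟩
    exact ⟨a ⊔ b, M.sup_mem ha hb, Prod.ext rfl (hf a b ha hb).1⟩
  infClosed' := by
    rintro _ ⟨a, ha, rfl⟩ _ ⟨b, hb, rfl⟩
    exact ⟨a ⊓ b, M.inf_mem ha hb, Prod.ext rfl (hf a b ha hb).2⟩

theorem exists_isLatticeHomOn_of_graph [Nonempty K] {G : Sublattice (E × K)}
    (hdom : ∀ a ∈ M, ∃ l, (a, l) ∈ G)
    (huniq : ∀ a l l', (a, l) ∈ G → (a, l') ∈ G → l = l') :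
    ∃ g : E → K, IsLatticeHomOn g M ∧ ∀ a ∈ M, (a, g a) ∈ G := by
  choose! g hg using hdom
  refine ⟨g, fun a b ha hb => ⟨?_, ?_⟩, hg⟩
  · exact huniq _ _ _ (hg _ (M.sup_mem ha hb)) (G.sup_mem (hg a ha) (hg b hb))
  · exact huniq _ _ _ (hg _ (M.inf_mem ha hb)) (G.inf_mem (hg a ha) (hg b hb))

end Graph

section Extension

variable {E K : Type*} [DistribLattice E] [DistribLattice K] {M : Sublattice E} {f : E → K}
  {P N : E} {u v : K}

/-- The inequalities that a lattice homomorphism extending `f : M → K` with `P ↦ u` and `N ↦ v`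
has to satisfy. -/
structure IsCompatible (M : Sublattice E) (f : E → K) (P N : E) (u v : K) : Prop where
  left : ∀ a ∈ M, ∀ b ∈ M, a ⊓ P ≤ b → f a ⊓ u ≤ f b
  right : ∀ a ∈ M, ∀ b ∈ M, a ⊓ N ≤ b → f a ⊓ v ≤ f b
  sup : ∀ a ∈ M, ∀ b ∈ M, a ≤ b ⊔ P ⊔ N → f a ≤ f b ⊔ u ⊔ v

theorem IsCompatible.symm (h : IsCompatible M f P N u v) : IsCompatible M f N P v u where
  left := h.right
  right := h.left
  sup a ha b hb hab := by
    rw [sup_right_comm] at hab ⊢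
    exact h.sup a ha b hb hab

variable [OrderBot E]

theorem IsCompatible.map_inf_le (h : IsCompatible M f P N u v) (hf : IsLatticeHomOn f M)
    (hPN : Disjoint P N) {a b c d : E} (ha : a ∈ M) (hb : b ∈ M) (hd : d ∈ M)
    (hdP : d ⊓ P ≤ a ⊔ b ⊓ P ⊔ c ⊓ N) : f d ⊓ u ≤ f a ⊔ f b ⊓ u ⊔ f c ⊓ v := by
  have hdab : d ⊓ P ≤ a ⊔ b :=
    calc d ⊓ P ≤ (a ⊔ b ⊓ P ⊔ c ⊓ N) ⊓ P := le_inf hdP inf_le_right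
      _ = (a ⊔ b ⊓ P) ⊓ P := by
        rw [inf_sup_right, inf_assoc c, hPN.symm.eq_bot, inf_bot_eq, sup_bot_eq]
      _ ≤ a ⊔ b := inf_le_left.trans (sup_le_sup_left inf_le_left a)
  calc f d ⊓ u ≤ (f a ⊔ f b) ⊓ u := by
        rw [← (hf a b ha hb).1]
        exact le_inf (h.left d hd _ (M.sup_mem ha hb) hdab) inf_le_right
    _ ≤ f a ⊔ f b ⊓ u := by
        rw [inf_sup_right]
        exact sup_le_sup_right inf_le_left _
    _ ≤ f a ⊔ f b ⊓ u ⊔ f c ⊓ v := le_sup_left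

variable [OrderBot K]

theorem IsCompatible.snd_le_snd (h : IsCompatible M f P N u v) (hf : IsLatticeHomOn f M)
    (hPN : Disjoint P N) (hPuNv : Disjoint (P, u) (N, v)) {z w : E × K}
    (hz : z ∈ adjoinDisjoint hf.graph hPuNv) (hw : w ∈ adjoinDisjoint hf.graph hPuNv)
    (hzw : z.1 ≤ w.1) : z.2 ≤ w.2 := by
  obtain ⟨_, ⟨a, ha, rfl⟩, _, ⟨b, hb, rfl⟩, _, ⟨c, hc, rfl⟩, rfl⟩ := hz
  obtain ⟨_, ⟨a', ha', rfl⟩, _, ⟨b', hb', rfl⟩, _, ⟨c', hc', rfl⟩, rfl⟩ := hw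
  change a ⊔ b ⊓ P ⊔ c ⊓ N ≤ a' ⊔ b' ⊓ P ⊔ c' ⊓ N at hzw
  change f a ⊔ f b ⊓ u ⊔ f c ⊓ v ≤ f a' ⊔ f b' ⊓ u ⊔ f c' ⊓ v
  obtain ⟨⟨haw, hbw⟩, hcw⟩ := by simpa only [sup_le_iff] using hzw
  have inf_u {d} (hd : d ∈ M) (hdw : d ⊓ P ≤ a' ⊔ b' ⊓ P ⊔ c' ⊓ N) :
      f d ⊓ u ≤ f a' ⊔ f b' ⊓ u ⊔ f c' ⊓ v := h.map_inf_le hf hPN ha' hb' hd hdw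
  have inf_v {d} (hd : d ∈ M) (hdw : d ⊓ N ≤ a' ⊔ b' ⊓ P ⊔ c' ⊓ N) :
      f d ⊓ v ≤ f a' ⊔ f b' ⊓ u ⊔ f c' ⊓ v := by
    rw [sup_right_comm] at hdw ⊢
    exact h.symm.map_inf_le hf hPN.symm ha' hc' hd hdw
  refine sup_le (sup_le ?_ (inf_u hb hbw)) (inf_v hc hcw)
  have hauv : f a ≤ f a' ⊔ u ⊔ v := h.sup a ha a' ha'
    (haw.trans (sup_le_sup (sup_le_sup_left inf_le_right a') inf_le_right))
  calc f a = f a ⊓ f a' ⊔ f a ⊓ u ⊔ f a ⊓ v := by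
        rw [← inf_sup_left, ← inf_sup_left, inf_eq_left.mpr hauv]
    _ ≤ f a' ⊔ f b' ⊓ u ⊔ f c' ⊓ v :=
        sup_le (sup_le (inf_le_right.trans (le_sup_left.trans le_sup_left))
          (inf_u ha (inf_le_left.trans haw))) (inf_v ha (inf_le_left.trans haw))

theorem IsCompatible.exists_extension (h : IsCompatible M f P N u v) (hf : IsLatticeHomOn f M)
    (hbot : ⊥ ∈ M) (hfbot : f ⊥ = ⊥) (hPN : Disjoint P N) (hPuNv : Disjoint (P, u) (N, v)) :
    ∃ g : E → K, IsLatticeHomOn g (adjoinDisjoint M hPN) ∧ Set.EqOn g f M ∧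
      ∀ U ∈ adjoinDisjoint M hPN, (U, g U) ∈ adjoinDisjoint hf.graph hPuNv := by
  have huniq (U l l') (hl : (U, l) ∈ adjoinDisjoint hf.graph hPuNv)
      (hl' : (U, l') ∈ adjoinDisjoint hf.graph hPuNv) : l = l' :=
    le_antisymm (h.snd_le_snd hf hPN hPuNv hl hl' le_rfl)
      (h.snd_le_snd hf hPN hPuNv hl' hl le_rfl)
  obtain ⟨g, hg, hgraph⟩ := exists_isLatticeHomOn_of_graph (M := adjoinDisjoint M hPN)
    (by
      rintro _ ⟨a, ha, b, hb, c, hc, rfl⟩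
      exact ⟨f a ⊔ f b ⊓ u ⊔ f c ⊓ v,
        _, ⟨a, ha, rfl⟩, _, ⟨b, hb, rfl⟩, _, ⟨c, hc, rfl⟩, rfl⟩) huniq
  have hgraphM (U) (hU : U ∈ M) : (U, f U) ∈ adjoinDisjoint hf.graph hPuNv :=
    le_adjoinDisjoint hPuNv (S := hf.graph) ⟨⊥, hbot, Prod.ext rfl hfbot⟩ ⟨U, hU, rfl⟩
  exact ⟨g, hg, fun U hU =>
    huniq U _ _ (hgraph U (le_adjoinDisjoint hPN hbot hU)) (hgraphM U hU), hgraph⟩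

end Extension

section Envelope

variable {E K : Type*} [DistribLattice E] [DistribLattice K] {M : Sublattice E} {f : E → K}
  {P N p n : E} {u v : K}

/-- `p` is a least element of `M` above `P`, and remains so after meeting with any member of
`M`. -/
structure IsEnvelope (M : Sublattice E) (P p : E) : Prop where
  mem : p ∈ M
  le : P ≤ p
  inf_le : ∀ a ∈ M, ∀ b ∈ M, a ⊓ P ≤ b → a ⊓ p ≤ b

/-- Envelopes `p`, `n` of `P`, `N` whose overlap is invisible wherever `P ⊔ N` covers: this is
what makes `f p`, `f n` shrinkable to disjoint images of `P`, `N`. -/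
structure IsEnvelopePair (M : Sublattice E) (P N p n : E) : Prop where
  left : IsEnvelope M P p
  right : IsEnvelope M N n
  inf_inf_le : ∀ a ∈ M, ∀ b ∈ M, a ≤ b ⊔ P ⊔ N → a ⊓ (p ⊓ n) ≤ b

/-- Disjoint elements `u ≤ s` and `v ≤ t` such that `u` agrees with `s` modulo `t`, and `v` with
`t` modulo `s`. Complete normality provides such elements for all `s` and `t`. -/
structure IsDisjointRefinement [OrderBot K] (s t u v : K) : Prop where
  disjoint : Disjoint u v
  left_le : u ≤ s
  right_le : v ≤ t
  le_left : s ≤ u ⊔ t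
  le_right : t ≤ v ⊔ s

theorem IsEnvelope.map_inf_le (hp : IsEnvelope M P p) (hf : IsLatticeHomOn f M) (hu : u ≤ f p)
    {a b : E} (ha : a ∈ M) (hb : b ∈ M) (h : a ⊓ P ≤ b) : f a ⊓ u ≤ f b :=
  calc f a ⊓ u ≤ f a ⊓ f p := inf_le_inf_left _ hu
    _ = f (a ⊓ p) := (hf a p ha hp.mem).2.symm
    _ ≤ f b := hf.monotoneOn (M.inf_mem ha hp.mem) hb (hp.inf_le a ha b hb h)

theorem IsDisjointRefinement.sup_le_sup_inf [OrderBot K] {s t : K}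
    (h : IsDisjointRefinement s t u v) : s ⊔ t ≤ u ⊔ v ⊔ s ⊓ t := by
  rw [sup_inf_left]
  refine sup_le (le_inf le_sup_right ?_) (le_inf ?_ le_sup_right)
  · exact h.le_left.trans (sup_le_sup_right le_sup_left _)
  · exact h.le_right.trans (sup_le_sup_right le_sup_right _)

theorem IsEnvelopePair.isCompatible [OrderBot K] (h : IsEnvelopePair M P N p n)
    (hf : IsLatticeHomOn f M) (huv : IsDisjointRefinement (f p) (f n) u v) :
    IsCompatible M f P N u v where
  left _ ha _ hb := h.left.map_inf_le hf huv.left_le ha hb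
  right _ ha _ hb := h.right.map_inf_le hf huv.right_le ha hb
  sup a ha b hb hab := by
    have hp := h.left.mem
    have hn := h.right.mem
    have hbp := M.sup_mem hb hp
    have cover : f a ≤ f b ⊔ (f p ⊔ f n) := by
      rw [← sup_assoc, ← (hf b p hb hp).1, ← (hf _ n hbp hn).1]
      exact hf.monotoneOn ha (M.sup_mem hbp hn)
        (hab.trans (sup_le_sup (sup_le_sup_left h.left.le b) h.right.le))
    have overlap : f a ⊓ (f p ⊓ f n) ≤ f b := by
      rw [← (hf p n hp hn).2, ← (hf a _ ha (M.inf_mem hp hn)).2]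
      exact hf.monotoneOn (M.inf_mem ha (M.inf_mem hp hn)) hb (h.inf_inf_le a ha b hb hab)
    calc f a ≤ f a ⊓ (f b ⊔ (u ⊔ v ⊔ f p ⊓ f n)) :=
          le_inf le_rfl (cover.trans (sup_le_sup_left huv.sup_le_sup_inf _))
      _ = f a ⊓ (f b ⊔ u ⊔ v) ⊔ f a ⊓ (f p ⊓ f n) := by
          rw [← sup_assoc, inf_sup_left, ← sup_assoc]
      _ ≤ f b ⊔ u ⊔ v := sup_le inf_le_right (overlap.trans (le_sup_left.trans le_sup_left))

end Envelope

section WithTop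

theorem withTop_sup_coe_eq_top {L : Type*} [SemilatticeSup L] {s : WithTop L} {l : L} :
    s ⊔ l = ⊤ ↔ s = ⊤ := by
  cases s with
  | top => simp
  | coe s => simp [← WithTop.coe_sup]

variable {E L : Type*} [DistribLattice E] [BoundedOrder E] [DistribLattice L] [OrderBot L]

theorem exists_isDisjointRefinement
    (hcn : ∀ a b : L, ∃ x y : L, a ⊔ b = a ⊔ y ∧ a ⊔ b = x ⊔ b ∧ x ⊓ y = ⊥) (s t : L) :
    ∃ u v : L, IsDisjointRefinement s t u v := by
  obtain ⟨x, y, hy, hx, hxy⟩ := hcn s t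
  refine ⟨x ⊓ s, y ⊓ t, ⟨?_, inf_le_right, inf_le_right, ?_, ?_⟩⟩
  · rw [disjoint_iff, inf_inf_inf_comm, hxy, bot_inf_eq]
  · rw [sup_inf_right, ← hx]
    exact le_inf le_sup_left le_sup_left
  · rw [sup_inf_right, sup_comm y, ← hy]
    exact le_inf le_sup_right le_sup_left

theorem exists_isDisjointRefinement_withTop
    (hcn : ∀ a b : L, ∃ x y : L, a ⊔ b = a ⊔ y ∧ a ⊔ b = x ⊔ b ∧ x ⊓ y = ⊥)
    {s t : WithTop L} (hst : s = ⊤ ↔ t = ⊤) :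
    ∃ u v : L, IsDisjointRefinement s t (u : WithTop L) v := by
  by_cases hs : s = ⊤
  · obtain rfl := hs
    obtain rfl := hst.mp rfl
    exact ⟨⊥, ⊥, by simp, le_top, le_top, le_sup_right, le_sup_right⟩
  · lift t to L using mt hst.mpr hs
    lift s to L using hs
    obtain ⟨u, v, h⟩ := exists_isDisjointRefinement hcn s t
    refine ⟨u, v, ?_, ?_, ?_, ?_, ?_⟩
    · rw [disjoint_iff, ← WithTop.coe_inf, h.disjoint.eq_bot, WithTop.coe_bot]
    · exact_mod_cast h.left_le
    · exact_mod_cast h.right_le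
    · exact_mod_cast h.le_left
    · exact_mod_cast h.le_right

theorem fst_eq_top_of_mem_adjoinDisjoint {M : Sublattice E} {f : E → WithTop L}
    (hf : IsLatticeHomOn f M) (hftf : ∀ a ∈ M, f a = ⊤ → a = ⊤) {P N : E} {u v : L}
    (hPuNv : Disjoint (P, (u : WithTop L)) (N, ↑v)) {z : E × WithTop L}
    (hz : z ∈ adjoinDisjoint hf.graph hPuNv) (hztop : z.2 = ⊤) : z.1 = ⊤ := by
  obtain ⟨_, ⟨a, ha, rfl⟩, _, ⟨b, -, rfl⟩, _, ⟨c, -, rfl⟩, rfl⟩ := hz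
  change f a ⊔ f b ⊓ u ⊔ f c ⊓ v = ⊤ at hztop
  have hfa : f a = ⊤ := by
    obtain ⟨b', hb'⟩ := WithTop.ne_top_iff_exists.mp
      (ne_top_of_le_ne_top WithTop.coe_ne_top (inf_le_right : f b ⊓ u ≤ u))
    obtain ⟨c', hc'⟩ := WithTop.ne_top_iff_exists.mp
      (ne_top_of_le_ne_top WithTop.coe_ne_top (inf_le_right : f c ⊓ v ≤ v))
    rwa [← hb', ← hc', withTop_sup_coe_eq_top, withTop_sup_coe_eq_top] at hztop
  change a ⊔ b ⊓ P ⊔ c ⊓ N = ⊤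
  rw [hftf a ha hfa, top_sup_eq, top_sup_eq]

theorem IsEnvelopePair.exists_topFaithful_extension
    (hcn : ∀ a b : L, ∃ x y : L, a ⊔ b = a ⊔ y ∧ a ⊔ b = x ⊔ b ∧ x ⊓ y = ⊥)
    {M : Sublattice E} (hbot : ⊥ ∈ M) {f : E → WithTop L} (hf : IsLatticeHomOn f M)
    (hfbot : f ⊥ = ⊥) (hftf : ∀ a ∈ M, f a = ⊤ ↔ a = ⊤) {P N p n : E} (hPN : Disjoint P N)
    (h : IsEnvelopePair M P N p n) (hpn : p = ⊤ ↔ n = ⊤) :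
    ∃ g : E → WithTop L, IsLatticeHomOn g (adjoinDisjoint M hPN) ∧ Set.EqOn g f M ∧
      ∀ U ∈ adjoinDisjoint M hPN, g U = ⊤ → U = ⊤ := by
  obtain ⟨u, v, huv⟩ := exists_isDisjointRefinement_withTop hcn
    (s := f p) (t := f n) (by rw [hftf p h.left.mem, hftf n h.right.mem, hpn])
  have hPuNv : Disjoint (P, (u : WithTop L)) (N, ↑v) := Prod.disjoint_iff.mpr ⟨hPN, huv.disjoint⟩
  obtain ⟨g, hg, hgf, hgraph⟩ :=
    (h.isCompatible hf huv).exists_extension hf hbot hfbot hPN hPuNv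
  exact ⟨g, hg, hgf, fun U hU => fst_eq_top_of_mem_adjoinDisjoint hf
    (fun a ha => (hftf a ha).mp) hPuNv (hgraph U hU)⟩

end WithTop

/-! ### Ordered division rings -/

section Order

variable {k : Type*} [DivisionRing k] [LinearOrder k]

theorem isStrictOrderedRing_of_posMulStrictMono [CovariantClass k k (· + ·) (· < ·)]
    [PosMulStrictMono k] : IsStrictOrderedRing k := by
  have : AddLeftMono k := covariantClass_le_of_lt k k (· + ·)
  have : IsOrderedAddMonoid k := { add_le_add_left := fun _ _ h c => add_le_add_left h c }
  have : ZeroLEOneClass k := ⟨by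
    by_contra! h
    have hsq : (0 : k) < -1 * -1 := mul_pos (neg_pos.mpr h) (neg_pos.mpr h)
    rw [neg_mul_neg, one_mul] at hsq
    exact lt_asymm h hsq⟩
  exact IsStrictOrderedRing.of_mul_pos fun _ _ => mul_pos

variable [IsStrictOrderedRing k]

theorem denselyOrdered_of_divisionRing : DenselyOrdered k := by
  refine ⟨fun a b hab => ⟨(a + b) / 2, ?_, ?_⟩⟩
  · rw [lt_div_iff₀ two_pos, mul_two]
    gcongr
  · rw [div_lt_iff₀ two_pos, mul_two]
    gcongr

theorem sign_mul_add_eq {a b s : k} (hs : 0 < s)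
    (h : SignType.sign a ≠ 0 → SignType.sign b = SignType.sign a) :
    SignType.sign (a * s + b) = SignType.sign b := by
  rcases lt_trichotomy a 0 with ha | rfl | ha
  · have hb : b < 0 := by simpa [sign_neg ha, sign_eq_neg_one_iff] using h
    rw [sign_neg hb, sign_neg (add_neg (mul_neg_of_neg_of_pos ha hs) hb)]
  · rw [zero_mul, zero_add]
  · have hb : 0 < b := by simpa [sign_pos ha, sign_eq_one_iff] using h
    rw [sign_pos hb, sign_pos (add_pos (mul_pos ha hs) hb)]

theorem exists_sign_add_eq_sign {α : Type*} {S : Set α} (hS : S.Finite) (p q : α → k)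
    (h : ∀ a ∈ S, ∀ b ∈ S, SignType.sign (p a - p b) = SignType.sign (q a - q b)) :
    ∃ s : k, ∀ a ∈ S, SignType.sign (p a + s) = SignType.sign (q a) := by
  have : DenselyOrdered k := denselyOrdered_of_divisionRing
  by_cases hz : ∃ a ∈ S, q a = 0
  · obtain ⟨a, ha, hqa⟩ := hz
    refine ⟨-p a, fun b hb => ?_⟩
    rw [← sub_eq_add_neg, h b hb a ha, hqa, sub_zero]
  · push Not at hz
    have hlt : ∀ x ∈ p '' {a ∈ S | q a < 0}, ∀ y ∈ p '' {a ∈ S | 0 < q a}, x < y := by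
      rintro _ ⟨a, ⟨ha, hqa⟩, rfl⟩ _ ⟨b, ⟨hb, hqb⟩, rfl⟩
      have hab := h a ha b hb
      rwa [sign_neg (sub_neg.mpr (hqa.trans hqb)), sign_eq_neg_one_iff, sub_neg] at hab
    obtain ⟨m, hlo, hhi⟩ := Set.Finite.exists_between' ((hS.sep _).image p)
      ((hS.sep _).image p) hlt
    refine ⟨-m, fun a ha => ?_⟩
    rw [← sub_eq_add_neg]
    rcases (hz a ha).lt_or_gt with hq | hq
    · rw [sign_neg hq, sign_neg (sub_neg.mpr (hlo _ ⟨a, ⟨ha, hq⟩, rfl⟩))]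
    · rw [sign_pos hq, sign_pos (sub_pos.mpr (hhi _ ⟨a, ⟨ha, hq⟩, rfl⟩))]

end Order

section Pairing

variable {k ι : Type*} [DivisionRing k]

theorem pairing_add_right (a x y : ι →₀ k) : pairing a (x + y) = pairing a x + pairing a y := by
  simp [pairing, mul_add, Finsupp.sum_add]

theorem pairing_op_smul_right (a x : ι →₀ k) (c : k) :
    pairing a (MulOpposite.op c • x) = pairing a x * c := by
  simp [pairing, Finsupp.sum, Finset.sum_mul, mul_assoc]

theorem pairing_zero_right (a : ι →₀ k) : pairing a 0 = 0 := by
  simp [pairing]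

theorem pairing_neg_right (a x : ι →₀ k) : pairing a (-x) = -pairing a x := by
  simp [pairing, Finsupp.sum]

theorem pairing_single_right (a : ι →₀ k) (i : ι) (c : k) :
    pairing a (Finsupp.single i c) = a i * c := by
  classical
  simp only [pairing, Finsupp.single_apply, mul_ite, mul_zero]
  rw [Finsupp.sum_ite_eq]
  split_ifs with h
  · rfl
  · rw [Finsupp.notMem_support_iff.mp h, zero_mul]

theorem pairing_zero_left (x : ι →₀ k) : pairing 0 x = 0 := by
  simp [pairing]

theorem pairing_smul_left (c : k) (a x : ι →₀ k) : pairing (c • a) x = c * pairing a x := by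
  rw [pairing, Finsupp.sum_smul_index (by simp)]
  simp [pairing, Finsupp.sum, Finset.mul_sum, mul_assoc]

theorem pairing_sub_left (a b x : ι →₀ k) : pairing (a - b) x = pairing a x - pairing b x :=
  Finsupp.sum_sub_index fun i c d => sub_mul c d (x i)

end Pairing

theorem suppIn_mono {k ι : Type*} [Zero k] {I J : Set ι} (h : I ⊆ J) :
    (suppIn I : Set (ι →₀ k)) ⊆ suppIn J :=
  fun _ hy i hi => hy i fun hiI => hi (h hiI)

/-! ### Cells and elimination -/

section SameSigns

variable {k ι : Type*} [DivisionRing k] [LinearOrder k] {A B F : Set (ι →₀ k)}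
  {x y z : ι →₀ k}

/-- The points `x` and `y` lie in the same cell of the arrangement of the hyperplanes `⟦a = 0⟧`,
`a ∈ A`: each functional in `A` has the same sign at both. -/
def SameSigns (A : Set (ι →₀ k)) (x y : ι →₀ k) : Prop :=
  ∀ a ∈ A, SignType.sign (pairing a x) = SignType.sign (pairing a y)

theorem SameSigns.refl (A : Set (ι →₀ k)) (x : ι →₀ k) : SameSigns A x x :=
  fun _ _ => rfl

theorem SameSigns.symm (h : SameSigns A x y) : SameSigns A y x :=
  fun a ha => (h a ha).symm

theorem SameSigns.trans (h : SameSigns A x y) (h' : SameSigns A y z) : SameSigns A x z :=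
  fun a ha => (h a ha).trans (h' a ha)

theorem SameSigns.mono (hAB : A ⊆ B) (h : SameSigns B x y) : SameSigns A x y :=
  fun a ha => h a (hAB ha)

theorem SameSigns.union (hA : SameSigns A x y) (hB : SameSigns B x y) : SameSigns (A ∪ B) x y :=
  fun a ha => ha.elim (hA a) (hB a)

/-- Interpolation of sign patterns: a pattern on `A` and a pattern on `B` are realized by a common
point as soon as they are realized by points of the same `F`-cell. -/
def SignInterpolates (F A B : Set (ι →₀ k)) : Prop :=
  ∀ x z, SameSigns F x z → ∃ y, SameSigns A x y ∧ SameSigns B y z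

theorem SignInterpolates.mono_left {A' : Set (ι →₀ k)} (h : SignInterpolates F A B)
    (hA : A' ⊆ A) : SignInterpolates F A' B := fun x z hxz => by
  obtain ⟨y, hxy, hyz⟩ := h x z hxz
  exact ⟨y, hxy.mono hA, hyz⟩

theorem SignInterpolates.union_left {C : Set (ι →₀ k)} (h : SignInterpolates F A (B ∪ C)) :
    SignInterpolates (F ∪ B) (A ∪ B) C := fun x z hxz => by
  obtain ⟨y, hxy, hyz⟩ := h x z (hxz.mono Set.subset_union_left)
  have hyzB : SameSigns B y z := hyz.mono Set.subset_union_left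
  exact ⟨y, hxy.union ((hxz.mono Set.subset_union_right).trans hyzB.symm),
    hyz.mono Set.subset_union_right⟩

variable [IsStrictOrderedRing k]

theorem exists_signInterpolates_compl_singleton (i : ι) {D : Set (ι →₀ k)} (hD : D.Finite)
    {W : Set ι} (hW : D ⊆ suppIn W) :
    ∃ C ⊆ suppIn (W \ {i}), C.Finite ∧ SignInterpolates C (suppIn {i}ᶜ) D := by
  let D' : Set (ι →₀ k) := {d ∈ D | d i ≠ 0}
  have hD' : D'.Finite := hD.sep _
  refine ⟨{d ∈ D | d i = 0} ∪ Set.image2 (fun c d => (c i)⁻¹ • c - (d i)⁻¹ • d) D' D', ?_,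
    (hD.sep _).union (hD'.image2 _ hD'), fun x z hxz => ?_⟩
  · rintro c (⟨hc, hci⟩ | ⟨c, ⟨hc, hci⟩, d, ⟨hd, hdi⟩, rfl⟩) j hj
    · by_cases hji : j = i
      · rw [hji, hci]
      · exact hW hc j fun h => hj ⟨h, hji⟩
    · by_cases hji : j = i
      · simp [hji, hci, hdi]
      · have hjW : j ∉ W := fun h => hj ⟨h, hji⟩
        simp [hW hc j hjW, hW hd j hjW]
  · obtain ⟨s, hs⟩ := exists_sign_add_eq_sign hD' (fun d => (d i)⁻¹ * pairing d x)
      (fun d => (d i)⁻¹ * pairing d z) (by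
        intro c hc d hd
        simpa only [pairing_sub_left, pairing_smul_left] using
          hxz _ (Or.inr ⟨c, hc, d, hd, rfl⟩))
    have pairing_add_single (d : ι →₀ k) :
        pairing d (x + Finsupp.single i s) = pairing d x + d i * s := by
      rw [pairing_add_right, pairing_single_right]
    refine ⟨x + Finsupp.single i s, fun a ha => ?_, fun d hd => ?_⟩
    · rw [pairing_add_single, ha i (by simp), zero_mul, add_zero]
    · rw [pairing_add_single]
      by_cases hdi : d i = 0
      · rw [hdi, zero_mul, add_zero, hxz d (Or.inl ⟨hd, hdi⟩)]
      · rw [← mul_inv_cancel_left₀ hdi (pairing d x), ← mul_add, sign_mul, hs d ⟨hd, hdi⟩,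
          ← sign_mul, mul_inv_cancel_left₀ hdi]

theorem exists_signInterpolates_compl {T : Set ι} (hT : T.Finite) {D : Set (ι →₀ k)}
    (hD : D.Finite) {W : Set ι} (hW : D ⊆ suppIn W) :
    ∃ C ⊆ suppIn (W \ T), C.Finite ∧ SignInterpolates C (suppIn Tᶜ) D := by
  induction T, hT using Set.Finite.induction_on generalizing D W with
  | empty => exact ⟨D, by simpa using hW, hD, fun x z h => ⟨x, .refl _ x, h⟩⟩
  | @insert i T _ _ ih =>
    obtain ⟨C₁, hC₁W, hC₁, h₁⟩ := exists_signInterpolates_compl_singleton i hD hW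
    obtain ⟨C, hCW, hC, h⟩ := ih hC₁ hC₁W
    refine ⟨C, ?_, hC, fun x z hxz => ?_⟩
    · rwa [Set.insert_eq, ← Set.sdiff_sdiff]
    · obtain ⟨y, hxy, hyz⟩ := h x z hxz
      obtain ⟨w, hyw, hwz⟩ := h₁ y z hyz
      exact ⟨w, (hxy.mono (suppIn_mono (by simp))).trans (hyw.mono (suppIn_mono (by simp))), hwz⟩

theorem exists_finite_signInterpolates (I : Set ι) {D E : Set (ι →₀ k)} (hD : D.Finite)
    (hE : E.Finite) :
    ∃ F ⊆ suppIn I ∪ D, F.Finite ∧ SignInterpolates F (suppIn I ∪ D) E := by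
  let T : Set ι := (⋃ d ∈ D ∪ E, (d.support : Set ι)) \ I
  have hT : T.Finite := ((hD.union hE).biUnion fun d _ => d.support.finite_toSet).sdiff
  have hDT : D ∪ E ⊆ suppIn (I ∪ T) := fun d hd i hi => by
    by_contra hdi
    exact hi (Set.union_sdiff_self.symm ▸ Or.inr
      (Set.mem_biUnion hd (Finset.mem_coe.mpr (Finsupp.mem_support_iff.mpr hdi))))
  obtain ⟨C, hC, hCfin, h⟩ := exists_signInterpolates_compl hT (hD.union hE) hDT
  refine ⟨C ∪ D, ?_, hCfin.union hD, h.union_left.mono_left ?_⟩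
  · refine Set.union_subset_union_left D (hC.trans (suppIn_mono ?_))
    rintro i ⟨hi | hi, hiT⟩
    exacts [hi, absurd hi hiT]
  · exact Set.union_subset_union_left D (suppIn_mono fun i hi hiT => hiT.2 hi)

end SameSigns

/-! ### The lattices `Op(A, k^(ι))` -/

section OpLattice

variable {k ι : Type*} [DivisionRing k] [LinearOrder k] {A F U V : Set (ι →₀ k)}
  {x y z : ι →₀ k}

theorem MemOp.mem_of_sameSigns (hU : MemOp A U) (hxy : SameSigns A x y) (hx : x ∈ U) : y ∈ U := by
  induction hU with
  | pos a ha =>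
    rw [Set.mem_ofPred_eq, ← sign_eq_one_iff] at hx ⊢
    rw [← hxy a ha, hx]
  | neg a ha =>
    rw [Set.mem_ofPred_eq, ← sign_eq_neg_one_iff] at hx ⊢
    rw [← hxy a ha, hx]
  | union _ _ ihU ihV => exact hx.imp ihU ihV
  | inter _ _ ihU ihV => exact hx.imp ihU ihV

theorem MemOpTop.mem_of_sameSigns (hU : MemOpTop A U) (hxy : SameSigns A x y) (hx : x ∈ U) :
    y ∈ U := by
  rcases hU with hU | rfl
  · exact hU.mem_of_sameSigns hxy hx
  · exact Set.mem_univ y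

theorem MemOp.zero_notMem (hU : MemOp A U) : (0 : ι →₀ k) ∉ U := by
  induction hU with
  | pos | neg => simp [pairing_zero_right]
  | union _ _ ihU ihV => exact fun h => h.elim ihU ihV
  | inter _ _ ihU _ => exact fun h => ihU h.1

theorem MemOpTop.eq_univ_iff (hU : MemOpTop A U) : U = Set.univ ↔ (0 : ι →₀ k) ∈ U :=
  ⟨fun h => h ▸ Set.mem_univ 0, fun h => hU.resolve_left fun hU' => hU'.zero_notMem h⟩

theorem MemOpTop.union (hU : MemOpTop A U) (hV : MemOpTop A V) : MemOpTop A (U ∪ V) := by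
  rcases hU with hU | rfl
  · rcases hV with hV | rfl
    · exact Or.inl (hU.union hV)
    · exact Or.inr (Set.union_univ U)
  · exact Or.inr (Set.univ_union V)

theorem MemOpTop.inter (hU : MemOpTop A U) (hV : MemOpTop A V) : MemOpTop A (U ∩ V) := by
  rcases hU with hU | rfl
  · rcases hV with hV | rfl
    · exact Or.inl (hU.inter hV)
    · rw [Set.inter_univ]
      exact Or.inl hU
  · rwa [Set.univ_inter]

/-- `Op(A, k^(ι))` as a sublattice of the powerset of `k^(ι)`. -/
def opLattice (A : Set (ι →₀ k)) : Sublattice (Set (ι →₀ k)) where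
  carrier := {U | MemOpTop A U}
  supClosed' _ hU _ hV := MemOpTop.union hU hV
  infClosed' _ hU _ hV := MemOpTop.inter hU hV

theorem top_mem_opLattice : ⊤ ∈ opLattice A :=
  Or.inr rfl

theorem bot_mem_opLattice (hA : 0 ∈ A) : ⊥ ∈ opLattice A :=
  Or.inl (by simpa [pairing_zero_left] using MemOp.pos 0 hA)

theorem disjoint_pos_neg (e : ι →₀ k) :
    Disjoint {x : ι →₀ k | 0 < pairing e x} {x | pairing e x < 0} :=
  Set.disjoint_left.mpr fun _ => lt_asymm

theorem opLattice_union_singleton_le_adjoinDisjoint (hA : 0 ∈ A) (e : ι →₀ k) :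
    opLattice (A ∪ {e}) ≤ adjoinDisjoint (opLattice A) (disjoint_pos_neg e) := by
  have hbot : ⊥ ∈ opLattice A := bot_mem_opLattice hA
  have hle := le_adjoinDisjoint (disjoint_pos_neg e) hbot
  rintro U (hU | rfl)
  · induction hU with
    | pos a ha =>
      obtain ha | rfl := ha
      · exact hle (Or.inl (.pos a ha))
      · exact left_mem_adjoinDisjoint _ hbot top_mem_opLattice
    | neg a ha =>
      obtain ha | rfl := ha
      · exact hle (Or.inl (.neg a ha))
      · exact right_mem_adjoinDisjoint _ hbot top_mem_opLattice
    | union _ _ ihU ihV => exact Sublattice.sup_mem ihU ihV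
    | inter _ _ ihU ihV => exact Sublattice.inf_mem ihU ihV
  · exact hle top_mem_opLattice

/-- The union of the `F`-cells whose closure contains the `F`-cell of `y`. -/
def openStar (F : Set (ι →₀ k)) (y : ι →₀ k) : Set (ι →₀ k) :=
  {x | ∀ a ∈ F, SignType.sign (pairing a y) ≠ 0 →
    SignType.sign (pairing a x) = SignType.sign (pairing a y)}

theorem mem_openStar_self (F : Set (ι →₀ k)) (y : ι →₀ k) : y ∈ openStar F y :=
  fun _ _ _ => rfl

theorem SameSigns.openStar_eq (h : SameSigns F y z) : openStar F y = openStar F z := by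
  ext x
  exact forall₂_congr fun a ha => by rw [h a ha]

theorem finite_range_openStar (hF : F.Finite) : (Set.range (openStar F)).Finite := by
  have : Finite F := hF
  let starOfPattern : (F → SignType) → Set (ι →₀ k) := fun σ =>
    {x | ∀ a : F, σ a ≠ 0 → SignType.sign (pairing a.1 x) = σ a}
  refine (Set.finite_range starOfPattern).subset ?_
  rintro _ ⟨y, rfl⟩
  refine ⟨fun a => SignType.sign (pairing a.1 y), ?_⟩
  ext x
  exact Subtype.forall

theorem openStar_singleton_mem_opLattice {a : ι →₀ k} (ha : a ∈ A) (y : ι →₀ k) :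
    openStar {a} y ∈ opLattice A := by
  rcases lt_trichotomy (pairing a y) 0 with h | h | h
  · have hstar : openStar {a} y = {x | pairing a x < 0} := by
      ext x
      simp [openStar, h, h.ne, sign_eq_neg_one_iff]
    exact Or.inl (hstar ▸ .neg a ha)
  · exact Or.inr (by simp [openStar, h])
  · have hstar : openStar {a} y = {x | 0 < pairing a x} := by
      ext x
      simp [openStar, h, h.ne', sign_eq_one_iff]
    exact Or.inl (hstar ▸ .pos a ha)

theorem openStar_mem_opLattice (hF : F.Finite) (hFA : F ⊆ A) (y : ι →₀ k) :
    openStar F y ∈ opLattice A := by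
  induction F, hF using Set.Finite.induction_on with
  | empty => exact Or.inr (by simp [openStar])
  | @insert a F _ _ ih =>
    obtain ⟨ha, hFA⟩ := Set.insert_subset_iff.mp hFA
    have hinsert : openStar (insert a F) y = openStar {a} y ⊓ openStar F y := by
      ext x
      simp [openStar]
    rw [hinsert]
    exact Sublattice.inf_mem (openStar_singleton_mem_opLattice ha y) (ih hFA)

theorem mem_opLattice_of_openStar_subset (hA : 0 ∈ A) (hF : F.Finite) (hFA : F ⊆ A)
    (hU : ∀ x ∈ U, openStar F x ⊆ U) : U ∈ opLattice A := by
  have hsUnion : sSup (openStar F '' U) = U :=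
    (Set.sUnion_subset (Set.forall_mem_image.mpr hU)).antisymm fun x hx =>
      ⟨_, ⟨x, hx, rfl⟩, mem_openStar_self F x⟩
  rw [← hsUnion]
  refine (opLattice A).supClosed.sSup_mem
    ((finite_range_openStar hF).subset (Set.image_subset_range _ _)) (bot_mem_opLattice hA) ?_
  rintro _ ⟨y, -, rfl⟩
  exact openStar_mem_opLattice hF hFA y

variable [IsStrictOrderedRing k]

theorem sameSigns_op_smul_add {s : k} (hs : 0 < s) (hy : y ∈ openStar F z) :
    SameSigns F (MulOpposite.op s • z + y) y := fun a ha => by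
  rw [pairing_add_right, pairing_op_smul_right]
  exact sign_mul_add_eq hs (hy a ha)

theorem MemOp.eventually_op_smul_add_mem (hU : MemOp A U) (hz : z ∈ U) (x : ι →₀ k) :
    ∀ᶠ s : k in Filter.atTop, MulOpposite.op s • z + x ∈ U := by
  induction hU with
  | pos a =>
    filter_upwards [Filter.eventually_gt_atTop ((pairing a z)⁻¹ * -pairing a x)] with s hs
    rw [inv_mul_lt_iff₀ hz] at hs
    rwa [pairing_add_right, pairing_op_smul_right, ← neg_lt_iff_pos_add]
  | neg a =>
    have hz' : 0 < -pairing a z := neg_pos.mpr hz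
    filter_upwards [Filter.eventually_gt_atTop ((-pairing a z)⁻¹ * pairing a x)] with s hs
    rw [inv_mul_lt_iff₀ hz', neg_mul] at hs
    rwa [pairing_add_right, pairing_op_smul_right, ← lt_neg_iff_add_neg']
  | union _ _ ihU ihV =>
    rcases hz with hz | hz
    · exact (ihU hz).mono fun s => Or.inl
    · exact (ihV hz).mono fun s => Or.inr
  | inter _ _ ihU ihV => exact (ihU hz.1).and (ihV hz.2)

theorem exists_sameSigns_pairing_eq_zero {e w : ι →₀ k} (hzw : SameSigns F w z)
    (hz : 0 < pairing e z) (hw : pairing e w < 0) :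
    ∃ y, SameSigns F y w ∧ pairing e y = 0 := by
  refine ⟨MulOpposite.op ((pairing e z)⁻¹ * -pairing e w) • z + w,
    sameSigns_op_smul_add (mul_pos (inv_pos.mpr hz) (neg_pos.mpr hw)) fun a ha _ => hzw a ha, ?_⟩
  rw [pairing_add_right, pairing_op_smul_right, mul_inv_cancel_left₀ hz.ne', neg_add_cancel]

end OpLattice

/-! ### Envelopes of half-spaces -/

section CellHull

variable {k ι : Type*} [DivisionRing k] [LinearOrder k] {A B F P U V : Set (ι →₀ k)}

/-- The union of the `F`-cells meeting `P`; for finite `F` it serves as the envelope of an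
open `P`. -/
def cellHull (F P : Set (ι →₀ k)) : Set (ι →₀ k) :=
  {x | ∃ z ∈ P, SameSigns F x z}

theorem subset_cellHull (F P : Set (ι →₀ k)) : P ⊆ cellHull F P :=
  fun x hx => ⟨x, hx, .refl F x⟩

theorem SignInterpolates.exists_mem_sdiff (h : SignInterpolates F A B) (hU : U ∈ opLattice A)
    (hV : V ∈ opLattice A) {x z : ι →₀ k} (hx : x ∈ U \ V) (hxz : SameSigns F x z) :
    ∃ y ∈ U \ V, SameSigns B y z := by
  obtain ⟨y, hxy, hyz⟩ := h x z hxz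
  exact ⟨y, ⟨MemOpTop.mem_of_sameSigns hU hxy hx.1,
    fun hy => hx.2 (MemOpTop.mem_of_sameSigns hV hxy.symm hy)⟩, hyz⟩

theorem SignInterpolates.inter_cellHull_subset (h : SignInterpolates F A B) (hP : MemOp B P)
    (hU : U ∈ opLattice A) (hV : V ∈ opLattice A) (hUP : U ∩ P ⊆ V) : U ∩ cellHull F P ⊆ V := by
  rintro x ⟨hxU, z, hzP, hxz⟩
  by_contra hxV
  obtain ⟨y, hy, hyz⟩ := h.exists_mem_sdiff hU hV ⟨hxU, hxV⟩ hxz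
  exact hy.2 (hUP ⟨hy.1, hP.mem_of_sameSigns hyz.symm hzP⟩)

theorem zero_mem_cellHull_of_mapsTo_neg (hPV : Set.MapsTo (-·) P V) (h : 0 ∈ cellHull F P) :
    0 ∈ cellHull F V := by
  obtain ⟨z, hz, h0z⟩ := h
  refine ⟨-z, hPV hz, fun a ha => ?_⟩
  have haz : pairing a z = 0 := by
    rw [← sign_eq_zero_iff, ← h0z a ha, pairing_zero_right, sign_zero]
  rw [pairing_neg_right, haz, neg_zero, pairing_zero_right]

variable [IsStrictOrderedRing k]

theorem MemOp.cellHull_mem_opLattice (hP : MemOp B P) (hA : 0 ∈ A) (hF : F.Finite)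
    (hFA : F ⊆ A) : cellHull F P ∈ opLattice A := by
  refine mem_opLattice_of_openStar_subset hA hF hFA ?_
  rintro x ⟨z, hzP, hxz⟩ y hy
  obtain ⟨s, hsP, hs⟩ := ((hP.eventually_op_smul_add_mem hzP y).and
    (Filter.eventually_gt_atTop 0)).exists
  exact ⟨_, hsP, (sameSigns_op_smul_add hs (hxz.openStar_eq ▸ hy)).symm⟩

theorem SignInterpolates.isEnvelope_cellHull (h : SignInterpolates F A B) (hP : MemOp B P)
    (hA : 0 ∈ A) (hF : F.Finite) (hFA : F ⊆ A) :
    IsEnvelope (opLattice A) P (cellHull F P) where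
  mem := hP.cellHull_mem_opLattice hA hF hFA
  le := subset_cellHull F P
  inf_le _ hU _ hV := h.inter_cellHull_subset hP hU hV

theorem SignInterpolates.inter_cellHull_inter_cellHull_subset {e : ι →₀ k}
    (h : SignInterpolates F A {e}) (hU : U ∈ opLattice A) (hV : V ∈ opLattice A)
    (hUV : U ⊆ V ∪ {x | 0 < pairing e x} ∪ {x | pairing e x < 0}) :
    U ∩ (cellHull F {x | 0 < pairing e x} ∩ cellHull F {x | pairing e x < 0}) ⊆ V := by
  rintro x ⟨hxU, ⟨z, hz, hxz⟩, w, hw, hxw⟩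
  by_contra hxV
  obtain ⟨y, hyw, hy⟩ := exists_sameSigns_pairing_eq_zero (hxw.symm.trans hxz) hz hw
  obtain ⟨t, ht, hty⟩ := h.exists_mem_sdiff hU hV ⟨hxU, hxV⟩ (hxw.trans hyw.symm)
  have het : pairing e t = 0 := by simpa [hy, sign_eq_zero_iff] using hty e rfl
  rcases hUV ht.1 with (htV | hpos) | hneg
  · exact ht.2 htV
  · exact hpos.ne' het
  · exact hneg.ne het

theorem SignInterpolates.isEnvelopePair_cellHull {e : ι →₀ k} (h : SignInterpolates F A {e})
    (hA : 0 ∈ A) (hF : F.Finite) (hFA : F ⊆ A) :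
    IsEnvelopePair (opLattice A) {x | 0 < pairing e x} {x | pairing e x < 0}
      (cellHull F {x | 0 < pairing e x}) (cellHull F {x | pairing e x < 0}) where
  left := h.isEnvelope_cellHull (.pos e rfl) hA hF hFA
  right := h.isEnvelope_cellHull (.neg e rfl) hA hF hFA
  inf_inf_le _ hU _ hV := h.inter_cellHull_inter_cellHull_subset hU hV

theorem exists_isEnvelopePair_opLattice (I : Set ι) {D : Set (ι →₀ k)} (hD : D.Finite)
    (e : ι →₀ k) :
    ∃ p n, IsEnvelopePair (opLattice (suppIn I ∪ D)) {x | 0 < pairing e x} {x | pairing e x < 0}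
      p n ∧ (p = ⊤ ↔ n = ⊤) := by
  obtain ⟨F, hFA, hF, h⟩ := exists_finite_signInterpolates I hD (Set.finite_singleton e)
  have henv := h.isEnvelopePair_cellHull (Or.inl fun _ _ => rfl) hF hFA
  have hpos : Set.MapsTo (-·) {x | 0 < pairing e x} {x | pairing e x < 0} := fun x hx => by
    simpa [pairing_neg_right] using hx
  have hneg : Set.MapsTo (-·) {x | pairing e x < 0} {x | 0 < pairing e x} := fun x hx => by
    simpa [pairing_neg_right] using hx
  refine ⟨_, _, henv, ?_⟩
  rw [Set.top_eq_univ, MemOpTop.eq_univ_iff henv.left.mem, MemOpTop.eq_univ_iff henv.right.mem]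
  exact ⟨zero_mem_cellHull_of_mapsTo_neg hpos, zero_mem_cellHull_of_mapsTo_neg hneg⟩

end CellHull

/-- domain step: with `J = ι`, `I ⊆ J`, `L` a completely normal
distributive `0`-lattice, `D ⊆ k^(J)` finite and `e ∈ k^(J)`, every top-faithful
`0`-lattice homomorphism `f : Op(k^(I) ∪ D, k^(J)) → L ∪ {∞}` extends to a top-faithful
lattice homomorphism `g : Op(k^(I) ∪ D ∪ {e}, k^(J)) → L ∪ {∞}`.  Here `L ∪ {∞}` is
`WithTop L`, and top-faithfulness means that the only member of the domain lattice sent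
to `∞` is the top element `k^(J)` (= `Set.univ`). -/
theorem stmt15 (k ι : Type*) [DivisionRing k] [LinearOrder k]
    [CovariantClass k k (· + ·) (· < ·)] [PosMulStrictMono k] [MulPosStrictMono k]
    (I : Set ι)
    (L : Type*) [DistribLattice L] [OrderBot L]
    (hcn : ∀ a b : L, ∃ x y : L, a ⊔ b = a ⊔ y ∧ a ⊔ b = x ⊔ b ∧ x ⊓ y = ⊥)
    (D : Set (ι →₀ k)) (hD : D.Finite) (e : ι →₀ k)
    (f : Set (ι →₀ k) → WithTop L)
    (hf : ∀ U V : Set (ι →₀ k), MemOpTop (suppIn I ∪ D) U → MemOpTop (suppIn I ∪ D) V →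
      f (U ∪ V) = f U ⊔ f V ∧ f (U ∩ V) = f U ⊓ f V)
    (hf0 : f ∅ = ⊥)
    (hftf : ∀ U : Set (ι →₀ k), MemOpTop (suppIn I ∪ D) U → (f U = ⊤ ↔ U = Set.univ)) :
    ∃ g : Set (ι →₀ k) → WithTop L,
      (∀ U V : Set (ι →₀ k),
        MemOpTop (suppIn I ∪ D ∪ {e}) U → MemOpTop (suppIn I ∪ D ∪ {e}) V →
        g (U ∪ V) = g U ⊔ g V ∧ g (U ∩ V) = g U ⊓ g V) ∧
      (∀ U : Set (ι →₀ k), MemOpTop (suppIn I ∪ D ∪ {e}) U → (g U = ⊤ ↔ U = Set.univ)) ∧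
      (∀ U : Set (ι →₀ k), MemOpTop (suppIn I ∪ D) U → g U = f U) := by
  have : IsStrictOrderedRing k := isStrictOrderedRing_of_posMulStrictMono
  have hbot : ⊥ ∈ opLattice (suppIn I ∪ D) := bot_mem_opLattice (Or.inl fun _ _ => rfl)
  obtain ⟨p, n, henv, hpn⟩ := exists_isEnvelopePair_opLattice I hD e
  obtain ⟨g, hg, hgf, hgtop⟩ := henv.exists_topFaithful_extension hcn hbot hf hf0 hftf
    (disjoint_pos_neg e) hpn
  have hle : opLattice (suppIn I ∪ D ∪ {e}) ≤ adjoinDisjoint _ (disjoint_pos_neg e) :=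
    opLattice_union_singleton_le_adjoinDisjoint (Or.inl fun _ _ => rfl) e
  refine ⟨g, hg.mono hle, fun U hU => ⟨hgtop U (hle hU), ?_⟩, hgf⟩
  rintro rfl
  rw [hgf (Or.inr rfl), (hftf _ (Or.inr rfl)).mpr rfl]
end
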